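/- arXiv:1606.05099 — 8 statements merged into one kernel-verified Lean document; each statement's English description precedes it below -/
import Mathlib

section
/- Let α ∈ ((√33 − 5)/2, √2 − 1) and let T_α be the 2-expansion map on [α, α+1]. Then T_α³(α) = T_α³(α + 1), i.e. matching holds for α with matching exponents (3,3). -/
/-- The `N`-expansion map for `N = 2`: `T_α(x) = 2/x - ⌊2/x - α⌋`. -/
noncomputable def Texp (α x : ℝ) : ℝ := 2 / x - ↑⌊2 / x - α⌋

/-!
On the given interval the first two digits are constant: `4, 1` along the orbit of `α` and `1, 4`
along the orbit of `α + 1`. Hence both second iterates are explicit Möbius functions of `α`,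
`(6α - 2) / (2 - 4α)` and `(6α - 2) / (1 - α)`, and the numbers `2 / x` formed from them differ by
exactly `1`. Since `T_α x` depends only on `2 / x` modulo `ℤ`, the third iterates coincide.
-/

section Texp

variable {α : ℝ}

theorem Texp_eq_of_two_div_eq_add_int {x y : ℝ} {n : ℤ} (h : 2 / x = 2 / y + n) :
    Texp α x = Texp α y := by
  rw [Texp, Texp, h, add_sub_right_comm _ _ α, Int.floor_add_intCast, Int.cast_add,
    add_sub_add_right_eq_sub]

theorem Texp_div_eq_of_le_of_lt {p q : ℝ} (d : ℤ) (hp : 0 < p) (hle : (d + α) * p ≤ 2 * q)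
    (hlt : 2 * q < (d + 1 + α) * p) : Texp α (p / q) = (2 * q - d * p) / p := by
  have hfloor : ⌊2 * q / p - α⌋ = d := by
    rw [Int.floor_eq_iff, le_sub_iff_add_le, sub_lt_iff_lt_add, le_div_iff₀ hp, div_lt_iff₀ hp]
    exact ⟨hle, hlt⟩
  rw [Texp, div_div_eq_mul_div, hfloor, sub_div, mul_div_cancel_right₀ _ hp.ne']

theorem Texp_eq_of_le_of_lt {x : ℝ} (d : ℤ) (hx : 0 < x) (hle : (d + α) * x ≤ 2)
    (hlt : 2 < (d + 1 + α) * x) : Texp α x = (2 - d * x) / x := by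
  simpa only [div_one, mul_one] using
    Texp_div_eq_of_le_of_lt (q := 1) d hx (by rwa [mul_one]) (by rwa [mul_one])

theorem Texp_Texp_self (hlower : 2 < α ^ 2 + 5 * α) (hupper : α ^ 2 + 2 * α < 1) :
    Texp α (Texp α α) = (6 * α - 2) / (2 - 4 * α) := by
  have hhalf : α < 1 / 2 := by nlinarith
  have hfirst : Texp α α = (2 - 4 * α) / α :=
    mod_cast Texp_eq_of_le_of_lt 4 (by linarith) (by push_cast; linarith) (by push_cast; linarith)
  have hsecond : Texp α ((2 - 4 * α) / α) = (2 * α - 1 * (2 - 4 * α)) / (2 - 4 * α) :=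
    mod_cast Texp_div_eq_of_le_of_lt 1 (by linarith)
      (by push_cast; linarith [sq_nonneg (3 * α - 1)]) (by push_cast; linarith)
  rw [hfirst, hsecond]
  ring

theorem Texp_Texp_add_one (hlower : 2 < α ^ 2 + 5 * α) (hupper : α ^ 2 + 2 * α < 1) :
    Texp α (Texp α (α + 1)) = (6 * α - 2) / (1 - α) := by
  have hhalf : α < 1 / 2 := by nlinarith
  have hfirst : Texp α (α + 1) = (2 - 1 * (α + 1)) / (α + 1) :=
    mod_cast Texp_eq_of_le_of_lt 1 (by linarith) (by push_cast; linarith) (by push_cast; linarith)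
  have hsecond : Texp α ((1 - α) / (α + 1)) = (2 * (α + 1) - 4 * (1 - α)) / (1 - α) :=
    mod_cast Texp_div_eq_of_le_of_lt 4 (by linarith) (by push_cast; linarith)
      (by push_cast; linarith)
  rw [hfirst, show 2 - 1 * (α + 1) = 1 - α by ring, hsecond]
  ring

theorem Texp_six_mul_sub_two_div_eq (hα : α ≠ 1 / 3) :
    Texp α ((6 * α - 2) / (2 - 4 * α)) = Texp α ((6 * α - 2) / (1 - α)) := by
  have hnum : 6 * α - 2 ≠ 0 := fun h => hα (by linarith)
  apply Texp_eq_of_two_div_eq_add_int (n := -1)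
  rw [div_div_eq_mul_div, div_div_eq_mul_div, div_eq_iff hnum, add_mul, div_mul_cancel₀ _ hnum]
  push_cast
  ring

theorem two_lt_sq_add_five_mul (h : (√33 - 5) / 2 < α) : 2 < α ^ 2 + 5 * α := by
  have hsq : 33 < (2 * α + 5) ^ 2 := Real.lt_sq_of_sqrt_lt (by linarith)
  linarith

theorem sq_add_two_mul_lt_one (hα : -1 ≤ α) (h : α < √2 - 1) : α ^ 2 + 2 * α < 1 := by
  have hsq : (α + 1) ^ 2 < 2 := (Real.lt_sqrt (by linarith)).1 (by linarith)
  linarith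

end Texp

theorem stmt_0 (α : ℝ) (h₁ : (Real.sqrt 33 - 5) / 2 < α) (h₂ : α < Real.sqrt 2 - 1) :
    Texp α (Texp α (Texp α α)) = Texp α (Texp α (Texp α (α + 1))) := by
  have hα : -1 ≤ α := by linarith [Real.lt_sqrt_of_sq_lt (show (5 : ℝ) ^ 2 < 33 by norm_num)]
  have hlower : 2 < α ^ 2 + 5 * α := two_lt_sq_add_five_mul h₁
  have hupper : α ^ 2 + 2 * α < 1 := sq_add_two_mul_lt_one hα h₂
  rw [Texp_Texp_self hlower hupper, Texp_Texp_add_one hlower hupper]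
  have hthird : 1 / 3 < α := by linarith
  exact Texp_six_mul_sub_two_div_eq hthird.ne'
end

section
/- Let α ∈ ((√33 − 5)/2, √2 − 1) and let T_α be the 2-expansion map on [α, α+1]. Then T_α(α) = (2 − 4α)/α, this value lies in the open interval (2/(α+2), α+1), and consequently T_α²(α) = (3α − 1)/(1 − 2α). -/
/-!
On the cylinder `(2 / (α + d + 1), 2 / (α + d)]` the map is the single branch `x ↦ 2 / x - d`.
The two endpoints of the parameter interval are the positive roots of `α ^ 2 + 5 * α = 2`, where
`2 / α - 4 = α + 1`, and of `(α + 1) ^ 2 = 2`, where `2 / α - 4 = 2 / (α + 2)`. Strictly between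
them `α` lies in the cylinder of digit `4` and its image in the cylinder of digit `1`.
-/

section

variable {α : ℝ}

theorem Texp_eq_two_div_sub_of_mem_Ioc {x : ℝ} {d : ℤ} (hd : 0 < α + d)
    (hx : x ∈ Set.Ioc (2 / (α + d + 1)) (2 / (α + d))) : Texp α x = 2 / x - d := by
  obtain ⟨hlower, hupper⟩ := hx
  have hx_pos : 0 < x := lt_trans (by positivity) hlower
  have hdigit : ⌊2 / x - α⌋ = d := by
    have hle : α + d ≤ 2 / x := (le_div_comm₀ hx_pos hd).mp hupper
    have hlt : 2 / x < α + d + 1 := (div_lt_comm₀ (by positivity) hx_pos).mp hlower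
    exact Int.floor_eq_iff.mpr ⟨by linarith, by linarith⟩
  rw [Texp, hdigit]

theorem two_lt_sq_add_five_mul_of_sqrt_sub_div_lt (h : (Real.sqrt 33 - 5) / 2 < α) :
    2 < α ^ 2 + 5 * α := by
  have hsqrt : Real.sqrt 33 < 2 * α + 5 := by linarith
  have hsq : 33 < (2 * α + 5) ^ 2 :=
    (Real.sqrt_lt' ((Real.sqrt_nonneg 33).trans_lt hsqrt)).mp hsqrt
  linarith

theorem pos_of_sqrt_sub_div_lt (h : (Real.sqrt 33 - 5) / 2 < α) : 0 < α := by
  have hsqrt : 5 < Real.sqrt 33 := Real.lt_sqrt_of_sq_lt (by norm_num)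
  linarith

theorem lt_half_of_add_one_sq_lt_two (h : (α + 1) ^ 2 < 2) : α < 1 / 2 := by
  nlinarith [sq_nonneg α]

theorem two_sub_four_mul_div_mem_Ioo (hpos : 0 < α) (hlower : 2 < α ^ 2 + 5 * α)
    (hupper : (α + 1) ^ 2 < 2) : (2 - 4 * α) / α ∈ Set.Ioo (2 / (α + 2)) (α + 1) := by
  constructor
  · rw [div_lt_div_iff₀ (by positivity) hpos]
    linarith
  · rw [div_lt_iff₀ hpos]
    linarith

theorem Texp_self_eq (hpos : 0 < α) (hlower : 2 < α ^ 2 + 5 * α) (hupper : (α + 1) ^ 2 < 2) :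
    Texp α α = (2 - 4 * α) / α := by
  have hhalf : α < 1 / 2 := lt_half_of_add_one_sq_lt_two hupper
  have hcylinder : α ∈ Set.Ioc (2 / (α + (4 : ℤ) + 1)) (2 / (α + (4 : ℤ))) := by
    push_cast
    constructor
    · rw [div_lt_iff₀ (by positivity)]
      linarith
    · rw [le_div_iff₀ (by positivity)]
      linarith
  rw [Texp_eq_two_div_sub_of_mem_Ioc (by positivity) hcylinder]
  push_cast
  field_simp

theorem Texp_eq_two_div_sub_one_of_mem_Ioc {x : ℝ} (hpos : 0 < α + 1) (hsq : (α + 1) ^ 2 ≤ 2)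
    (hx : x ∈ Set.Ioc (2 / (α + 2)) (α + 1)) : Texp α x = 2 / x - 1 := by
  have hle : α + 1 ≤ 2 / (α + 1) := by rwa [le_div_iff₀ hpos, ← sq]
  have hcylinder : x ∈ Set.Ioc (2 / (α + (1 : ℤ) + 1)) (2 / (α + (1 : ℤ))) := by
    rw [Int.cast_one, add_assoc, one_add_one_eq_two]
    exact ⟨hx.1, hx.2.trans hle⟩
  simpa only [Int.cast_one] using
    Texp_eq_two_div_sub_of_mem_Ioc (by simpa only [Int.cast_one] using hpos) hcylinder

theorem two_div_two_sub_four_mul_div_sub_one (h : α < 1 / 2) :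
    2 / ((2 - 4 * α) / α) - 1 = (3 * α - 1) / (1 - 2 * α) := by
  have hne : 1 - 2 * α ≠ 0 := by linarith
  rw [div_div_eq_mul_div, show 2 - 4 * α = 2 * (1 - 2 * α) by ring,
    mul_div_mul_left _ _ two_ne_zero, div_sub_one hne]
  ring

end

theorem stmt_1 (α : ℝ) (h₁ : (Real.sqrt 33 - 5) / 2 < α) (h₂ : α < Real.sqrt 2 - 1) :
    Texp α α = (2 - 4 * α) / α ∧
    (2 - 4 * α) / α ∈ Set.Ioo (2 / (α + 2)) (α + 1) ∧
    Texp α (Texp α α) = (3 * α - 1) / (1 - 2 * α) := by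
  have hpos : 0 < α := pos_of_sqrt_sub_div_lt h₁
  have hlower : 2 < α ^ 2 + 5 * α := two_lt_sq_add_five_mul_of_sqrt_sub_div_lt h₁
  have hupper : (α + 1) ^ 2 < 2 := (Real.lt_sqrt (by positivity)).mp (by linarith)
  have hself : Texp α α = (2 - 4 * α) / α := Texp_self_eq hpos hlower hupper
  have hmem := two_sub_four_mul_div_mem_Ioo hpos hlower hupper
  refine ⟨hself, hmem, ?_⟩
  calc Texp α (Texp α α) = Texp α ((2 - 4 * α) / α) := by rw [hself]
    _ = 2 / ((2 - 4 * α) / α) - 1 :=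
      Texp_eq_two_div_sub_one_of_mem_Ioc (by positivity) hupper.le (Set.Ioo_subset_Ioc_self hmem)
    _ = (3 * α - 1) / (1 - 2 * α) :=
      two_div_two_sub_four_mul_div_sub_one (lt_half_of_add_one_sq_lt_two hupper)
end

section
/- Let α ∈ ((√33 − 5)/2, (√51 − 6)/3] and let T_α be the 2-expansion map on [α, α+1]. Then T_α³(α) = T_α³(α + 1) = (5 − 13α)/(3α − 1). -/
/-!
The value `T_α(x)` depends only on `2 / x` modulo `1`. As long as `2 < α² + 5α` and
`α² + 2α < 1`, the first two digits of `α` are `4, 1` and those of `α + 1` are `1, 4`, so that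
`T_α²(α) = (3α - 1) / (1 - 2α)` and `T_α²(α + 1) = 2(3α - 1) / (1 - α)`. The numbers `2 / x` for
these two points differ by exactly `1`, hence the orbits meet at the third step. The stronger bound
`3α² + 12α ≤ 5` makes the third digit of `α` equal to `3`, which gives the common value.
The numbers `(√33 - 5) / 2` and `(√51 - 6) / 3` are the positive roots of `α² + 5α = 2` and
`3α² + 12α = 5`.
-/

theorem texp_eq_texp_of_two_div_eq_add_intCast (α : ℝ) {x y : ℝ} (m : ℤ)
    (h : 2 / x = 2 / y + m) : Texp α x = Texp α y := by
  have floor_shift : ⌊2 / x - α⌋ = ⌊2 / y - α⌋ + m := by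
    rw [h, add_sub_right_comm, Int.floor_add_intCast]
  rw [Texp, Texp, floor_shift, h, Int.cast_add, add_sub_add_right_eq_sub]

theorem texp_div_eq {α p q : ℝ} (k : ℤ) (hp : 0 < p) (hle : (α + k) * p ≤ 2 * q)
    (hlt : 2 * q < (α + k + 1) * p) : Texp α (p / q) = (2 * q - k * p) / p := by
  have two_div : 2 / (p / q) = 2 * q / p := div_div_eq_mul_div 2 p q
  have digit : ⌊2 * q / p - α⌋ = k := by
    rw [Int.floor_eq_iff, le_sub_iff_add_le', sub_lt_iff_lt_add', le_div_iff₀ hp, div_lt_iff₀ hp,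
      ← add_assoc]
    exact ⟨hle, hlt⟩
  rw [Texp, two_div, digit, sub_div, mul_div_cancel_right₀ _ hp.ne']

section Orbits

variable {α : ℝ}

theorem three_mul_sub_one_pos (hpos : 0 < α) (hlow : 2 ≤ α ^ 2 + 5 * α) : 0 < 3 * α - 1 := by
  nlinarith

theorem texp_texp_self (hpos : 0 < α) (hlow : 2 < α ^ 2 + 5 * α) (hup : α ^ 2 + 2 * α < 1) :
    Texp α (Texp α α) = (3 * α - 1) / (1 - 2 * α) := by
  have denom_pos : 0 < 2 - 4 * α := by nlinarith [three_mul_sub_one_pos hpos hlow.le]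
  have first : Texp α α = (2 - 4 * α) / α := by
    simpa using texp_div_eq (α := α) (q := 1) 4 hpos
      (by push_cast; nlinarith) (by push_cast; nlinarith)
  have second : Texp α ((2 - 4 * α) / α) = (2 * α - (2 - 4 * α)) / (2 - 4 * α) := by
    simpa using texp_div_eq (α := α) (p := 2 - 4 * α) (q := α) 1 denom_pos
      (by push_cast; nlinarith) (by push_cast; nlinarith)
  calc Texp α (Texp α α) = (2 * (3 * α - 1)) / (2 * (1 - 2 * α)) := by
        rw [first, second]; ring_nf
    _ = (3 * α - 1) / (1 - 2 * α) := mul_div_mul_left _ _ two_ne_zero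

theorem texp_texp_add_one (hpos : 0 < α) (hlow : 2 ≤ α ^ 2 + 5 * α) (hup : α ^ 2 + 2 * α ≤ 1) :
    Texp α (Texp α (α + 1)) = 2 * (3 * α - 1) / (1 - α) := by
  have first : Texp α (α + 1) = (1 - α) / (α + 1) := by
    rw [← div_one (α + 1), texp_div_eq 1 (by linarith)
      (by push_cast; nlinarith) (by push_cast; nlinarith)]
    push_cast
    ring_nf
  rw [first, texp_div_eq 4 (by nlinarith) (by push_cast; nlinarith) (by push_cast; nlinarith)]
  push_cast
  ring_nf

theorem texp_texp_texp_add_one_eq_texp_texp_texp_self (hpos : 0 < α)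
    (hlow : 2 < α ^ 2 + 5 * α) (hup : α ^ 2 + 2 * α < 1) :
    Texp α (Texp α (Texp α (α + 1))) = Texp α (Texp α (Texp α α)) := by
  have denom_ne : 3 * α - 1 ≠ 0 := (three_mul_sub_one_pos hpos hlow.le).ne'
  rw [texp_texp_self hpos hlow hup, texp_texp_add_one hpos hlow.le hup.le]
  apply texp_eq_texp_of_two_div_eq_add_intCast α 1
  rw [div_div_eq_mul_div, div_div_eq_mul_div, mul_div_mul_left _ _ two_ne_zero, Int.cast_one,
    div_add_one denom_ne]
  ring_nf

theorem texp_texp_texp_self (hpos : 0 < α) (hlow : 2 < α ^ 2 + 5 * α)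
    (hup : 3 * α ^ 2 + 12 * α ≤ 5) :
    Texp α (Texp α (Texp α α)) = (5 - 13 * α) / (3 * α - 1) := by
  have denom_pos : 0 < 3 * α - 1 := three_mul_sub_one_pos hpos hlow.le
  rw [texp_texp_self hpos hlow (by linarith [denom_pos]),
    texp_div_eq 3 denom_pos (by push_cast; linarith) (by push_cast; linarith)]
  push_cast
  ring_nf

end Orbits

theorem stmt_3 (α : ℝ) (h₁ : (Real.sqrt 33 - 5) / 2 < α) (h₂ : α ≤ (Real.sqrt 51 - 6) / 3) :
    Texp α (Texp α (Texp α α)) = (5 - 13 * α) / (3 * α - 1) ∧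
    Texp α (Texp α (Texp α (α + 1))) = (5 - 13 * α) / (3 * α - 1) := by
  have hpos : 0 < α := by
    have : 5 < √33 := Real.lt_sqrt_of_sq_lt (by norm_num)
    linarith
  have hlow : 2 < α ^ 2 + 5 * α := by
    have : 33 < (2 * α + 5) ^ 2 := Real.lt_sq_of_sqrt_lt (by linarith)
    linarith
  have hup : 3 * α ^ 2 + 12 * α ≤ 5 := by
    have : (3 * α + 6) ^ 2 ≤ 51 := (Real.le_sqrt' (by linarith)).mp (by linarith)
    linarith
  have hup_weak : α ^ 2 + 2 * α < 1 := by linarith [three_mul_sub_one_pos hpos hlow.le]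
  have value := texp_texp_texp_self hpos hlow hup
  exact ⟨value, (texp_texp_texp_add_one_eq_texp_texp_texp_self hpos hlow hup_weak).trans value⟩
end

section
/- Let α ∈ ((√33 − 5)/2, √2 − 1) and set A = (√33 − 5)/2, B = √2 − 1, C = (√33 − 3)/6, D = 2√2 − 2, E = (√33 − 3)/2, F = √2. Then ∫_α^{α+1} ( D/(2 + Dx)·1_{(α, (1−α)/(1+α))}(x) + E/(2 + Ex)·1_{((1−α)/(1+α), (3α−1)/(1−2α))}(x) + F/(2 + Fx)·1_{((3α−1)/(1−2α), α+1)}(x) − A/(2 + Ax)·1_{(α, (6α−2)/(1−α))}(x) − B/(2 + Bx)·1_{((6α−2)/(1−α), (2−4α)/α)}(x) − C/(2 + Cx)·1_{((2−4α)/α, α+1)}(x) ) dx = log((1/32)(3 + 2√2)(7 + √33)(√33 − 5)²); in particular this integral does not depend on α. -/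
/-!
Each indicator term `c / (2 + c t)` on `(p, q)` integrates to `log ((2 + c q) / (2 + c p))`, so the
integral is the logarithm of a product of six quotients. Every height is a quadratic irrational for
which the numerator and the denominator of its quotient carry the same linear factor: `α + √2 + 1`
for the heights in `ℚ(√2)` and `α + (√33 + 5) / 2` for those in `ℚ(√33)`. What remains of `α` is a
quotient of denominators of consecutive breakpoints, and these quotients telescope.
-/

open MeasureTheory Set

/-- The unnormalized invariant density, with
`A = (√33-5)/2`, `B = √2-1`, `C = (√33-3)/6`, `D = 2√2-2`, `E = (√33-3)/2`, `F = √2`. -/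
noncomputable def g (α x : ℝ) : ℝ :=
    indicator (Ioo α ((1 - α) / (1 + α)))
      (fun t => (2 * Real.sqrt 2 - 2) / (2 + (2 * Real.sqrt 2 - 2) * t)) x
  + indicator (Ioo ((1 - α) / (1 + α)) ((3 * α - 1) / (1 - 2 * α)))
      (fun t => ((Real.sqrt 33 - 3) / 2) / (2 + ((Real.sqrt 33 - 3) / 2) * t)) x
  + indicator (Ioo ((3 * α - 1) / (1 - 2 * α)) (α + 1))
      (fun t => Real.sqrt 2 / (2 + Real.sqrt 2 * t)) x
  - indicator (Ioo α ((6 * α - 2) / (1 - α)))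
      (fun t => ((Real.sqrt 33 - 5) / 2) / (2 + ((Real.sqrt 33 - 5) / 2) * t)) x
  - indicator (Ioo ((6 * α - 2) / (1 - α)) ((2 - 4 * α) / α))
      (fun t => (Real.sqrt 2 - 1) / (2 + (Real.sqrt 2 - 1) * t)) x
  - indicator (Ioo ((2 - 4 * α) / α) (α + 1))
      (fun t => ((Real.sqrt 33 - 3) / 6) / (2 + ((Real.sqrt 33 - 3) / 6) * t)) x

section Integration

theorem integral_indicator_Ioo {E : Type*} [NormedAddCommGroup E] [NormedSpace ℝ E] {f : ℝ → E}
    {μ : Measure ℝ} [NullSingletonClass μ] {a b p q : ℝ} (hap : a ≤ p) (hpq : p ≤ q) (hqb : q ≤ b) :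
    ∫ x in a..b, indicator (Ioo p q) f x ∂μ = ∫ x in p..q, f x ∂μ := by
  have hsub : Ioo p q ⊆ Ioc a b := fun x hx => ⟨hap.trans_lt hx.1, hx.2.le.trans hqb⟩
  rw [intervalIntegral.integral_of_le (hap.trans (hpq.trans hqb)),
    setIntegral_indicator measurableSet_Ioo, inter_eq_right.mpr hsub,
    ← integral_Ioc_eq_integral_Ioo, ← intervalIntegral.integral_of_le hpq]

theorem intervalIntegrable_indicator_Ioo {E : Type*} [NormedAddCommGroup E] {f : ℝ → E}
    {μ : Measure ℝ} {p q : ℝ} (hf : IntervalIntegrable f μ p q) (a b : ℝ) :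
    IntervalIntegrable (indicator (Ioo p q) f) μ a b :=
  ((hf.1.mono_set Ioo_subset_Ioc_self).integrable_indicator measurableSet_Ioo).intervalIntegrable

variable {N c p q : ℝ}

theorem intervalIntegrable_div_add_mul (hpq : p ≤ q) (hp : 0 < N + c * p) (hq : 0 < N + c * q) :
    IntervalIntegrable (fun x => c / (N + c * x)) volume p q := by
  have hpos : ∀ x ∈ uIcc p q, 0 < N + c * x := by
    intro x hx
    rw [uIcc_of_le hpq] at hx
    rcases le_total 0 c with hc | hc
    · linarith [mul_le_mul_of_nonneg_left hx.1 hc]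
    · linarith [mul_le_mul_of_nonpos_left hx.2 hc]
  refine ContinuousOn.intervalIntegrable ?_
  exact ContinuousOn.div (by fun_prop) (by fun_prop) fun x hx => (hpos x hx).ne'

theorem integral_div_add_mul (hp : 0 < N + c * p) (hq : 0 < N + c * q) :
    ∫ x in p..q, c / (N + c * x) = Real.log ((N + c * q) / (N + c * p)) := by
  simp only [div_eq_mul_inv c]
  rw [intervalIntegral.integral_const_mul, ← smul_eq_mul c,
    intervalIntegral.smul_integral_comp_add_mul (fun x => x⁻¹), integral_inv_of_pos hp hq]

end Integration

section StepDensity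

/-- The density `c i / (N + c i x)` on the open cell `(p i, p (i + 1))` of a partition `p`. For
`N = 2` it is the density of the `x`-marginal of the measure `2 / (2 + x y)² dx dy`, invariant under
the natural extension, restricted to the region between `0` and the step function with heights `c`.
-/
noncomputable def stepDensity {n : ℕ} (N : ℝ) (p : Fin (n + 1) → ℝ) (c : Fin n → ℝ) (x : ℝ) : ℝ :=
  ∑ i, indicator (Ioo (p i.castSucc) (p i.succ)) (fun t => c i / (N + c i * t)) x

variable {n : ℕ} {N : ℝ} {p : Fin (n + 1) → ℝ} {c : Fin n → ℝ}

theorem add_height_mul_breakpoint_pos (hN : 0 < N) (hc : ∀ i, 0 ≤ c i) (hp : Monotone p)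
    (hp₀ : 0 ≤ p 0) (i : Fin n) (j : Fin (n + 1)) : 0 < N + c i * p j :=
  add_pos_of_pos_of_nonneg hN (mul_nonneg (hc i) (hp₀.trans (hp (Fin.zero_le j))))

theorem intervalIntegrable_step (hN : 0 < N) (hc : ∀ i, 0 ≤ c i) (hp : Monotone p)
    (hp₀ : 0 ≤ p 0) (a b : ℝ) (i : Fin n) :
    IntervalIntegrable
      (indicator (Ioo (p i.castSucc) (p i.succ)) fun t => c i / (N + c i * t)) volume a b :=
  intervalIntegrable_indicator_Ioo
    (intervalIntegrable_div_add_mul (hp (Fin.castSucc_le_succ i))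
      (add_height_mul_breakpoint_pos hN hc hp hp₀ i _)
      (add_height_mul_breakpoint_pos hN hc hp hp₀ i _)) a b

theorem intervalIntegrable_stepDensity (hN : 0 < N) (hc : ∀ i, 0 ≤ c i) (hp : Monotone p)
    (hp₀ : 0 ≤ p 0) (a b : ℝ) : IntervalIntegrable (stepDensity N p c) volume a b := by
  have hsum := IntervalIntegrable.sum Finset.univ fun i _ =>
    intervalIntegrable_step hN hc hp hp₀ a b i
  exact hsum.congr fun x _ => Finset.sum_apply x Finset.univ _

theorem integral_stepDensity (hN : 0 < N) (hc : ∀ i, 0 ≤ c i) (hp : Monotone p) (hp₀ : 0 ≤ p 0) :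
    ∫ x in p 0..p (Fin.last n), stepDensity N p c x =
      Real.log (∏ i, (N + c i * p i.succ) / (N + c i * p i.castSucc)) := by
  have hpos := add_height_mul_breakpoint_pos hN hc hp hp₀
  unfold stepDensity
  rw [intervalIntegral.integral_finsetSum fun i _ => intervalIntegrable_step hN hc hp hp₀ _ _ i,
    Real.log_prod fun i _ => (div_pos (hpos i _) (hpos i _)).ne']
  refine Finset.sum_congr rfl fun i _ => ?_
  rw [integral_indicator_Ioo (hp (Fin.zero_le _)) (hp (Fin.castSucc_le_succ i))
      (hp (Fin.le_last _)),
    integral_div_add_mul (hpos i _) (hpos i _)]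

end StepDensity

section Boundary

/-- The orbit points `α`, `T(α+1)`, `T²(α)`, `α+1` between which the upper boundary of the natural
extension is constant. -/
noncomputable def upperBreakpoints (α : ℝ) : Fin 4 → ℝ :=
  ![α, (1 - α) / (1 + α), (3 * α - 1) / (1 - 2 * α), α + 1]

/-- The heights `D`, `E`, `F` of the upper boundary of the natural extension. -/
noncomputable def upperHeights : Fin 3 → ℝ :=
  ![2 * √2 - 2, (√33 - 3) / 2, √2]

/-- The orbit points `α`, `T²(α+1)`, `T(α)`, `α+1` between which the lower boundary of the natural
extension is constant. -/
noncomputable def lowerBreakpoints (α : ℝ) : Fin 4 → ℝ :=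
  ![α, (6 * α - 2) / (1 - α), (2 - 4 * α) / α, α + 1]

/-- The heights `A`, `B`, `C` of the lower boundary of the natural extension. -/
noncomputable def lowerHeights : Fin 3 → ℝ :=
  ![(√33 - 5) / 2, √2 - 1, (√33 - 3) / 6]

theorem g_eq_stepDensity_upper_sub_lower (α x : ℝ) :
    g α x = stepDensity 2 (upperBreakpoints α) upperHeights x -
      stepDensity 2 (lowerBreakpoints α) lowerHeights x := by
  simp only [g, stepDensity, Fin.sum_univ_three, sub_sub, add_assoc]
  rfl

theorem five_lt_sqrt_thirtyThree : 5 < √33 := Real.lt_sqrt_of_sq_lt (by norm_num)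

theorem sqrt_thirtyThree_lt_seven : √33 < 7 := (Real.sqrt_lt' (by norm_num)).mpr (by norm_num)

theorem upperHeights_nonneg (i : Fin 3) : 0 ≤ upperHeights i := by
  have hD : 0 ≤ 2 * √2 - 2 := by linarith [Real.one_lt_sqrt_two]
  have hE : 0 ≤ (√33 - 3) / 2 := by linarith [five_lt_sqrt_thirtyThree]
  have hF : 0 ≤ √2 := Real.sqrt_nonneg 2
  fin_cases i <;> assumption

theorem lowerHeights_nonneg (i : Fin 3) : 0 ≤ lowerHeights i := by
  have hA : 0 ≤ (√33 - 5) / 2 := by linarith [five_lt_sqrt_thirtyThree]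
  have hB : 0 ≤ √2 - 1 := by linarith [Real.one_lt_sqrt_two]
  have hC : 0 ≤ (√33 - 3) / 6 := by linarith [five_lt_sqrt_thirtyThree]
  fin_cases i <;> assumption

variable {α : ℝ}

theorem two_le_sq_add_five_mul (h : (√33 - 5) / 2 ≤ α) : 2 ≤ α ^ 2 + 5 * α := by
  have h33 : √33 ^ 2 = 33 := Real.sq_sqrt (by norm_num)
  nlinarith [five_lt_sqrt_thirtyThree]

theorem sq_add_two_mul_le_one (hα : 0 ≤ α) (h : α ≤ √2 - 1) : α ^ 2 + 2 * α ≤ 1 := by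
  have h2 : √2 ^ 2 = 2 := Real.sq_sqrt (by norm_num)
  nlinarith [hα]

theorem one_third_lt_of_two_le_sq_add_five_mul (hα : 0 ≤ α) (h : 2 ≤ α ^ 2 + 5 * α) :
    1 / 3 < α := by
  nlinarith [hα]

theorem lt_one_half_of_sq_add_two_mul_le_one (h : α ^ 2 + 2 * α ≤ 1) : α < 1 / 2 := by
  nlinarith

theorem monotone_upperBreakpoints (hα : 0 < α) (hlow : 2 ≤ α ^ 2 + 5 * α)
    (hup : α ^ 2 + 2 * α ≤ 1) : Monotone (upperBreakpoints α) := by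
  have hhalf := lt_one_half_of_sq_add_two_mul_le_one hup
  have hden : 0 < 1 + α := add_pos one_pos hα
  have h₀₁ : α ≤ (1 - α) / (1 + α) := by
    rw [le_div_iff₀ hden]; linarith
  have h₁₂ : (1 - α) / (1 + α) ≤ (3 * α - 1) / (1 - 2 * α) := by
    rw [div_le_div_iff₀ hden (by linarith)]; linarith
  have h₂₃ : (3 * α - 1) / (1 - 2 * α) ≤ α + 1 := by
    rw [div_le_iff₀ (by linarith)]; linarith
  rw [Fin.monotone_iff_le_succ]
  intro i
  fin_cases i <;> assumption

theorem monotone_lowerBreakpoints (hα : 0 < α) (hlow : 2 ≤ α ^ 2 + 5 * α)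
    (hup : α ^ 2 + 2 * α ≤ 1) : Monotone (lowerBreakpoints α) := by
  have hhalf := lt_one_half_of_sq_add_two_mul_le_one hup
  have h₀₁ : α ≤ (6 * α - 2) / (1 - α) := by
    rw [le_div_iff₀ (by linarith)]; linarith
  have h₁₂ : (6 * α - 2) / (1 - α) ≤ (2 - 4 * α) / α := by
    rw [div_le_div_iff₀ (by linarith) hα]; linarith
  have h₂₃ : (2 - 4 * α) / α ≤ α + 1 := by
    rw [div_le_iff₀ hα]; linarith
  rw [Fin.monotone_iff_le_succ]
  intro i
  fin_cases i <;> assumption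

theorem endpoint_quotient_D (hα : 0 ≤ α) :
    (2 + (2 * √2 - 2) * ((1 - α) / (1 + α))) / (2 + (2 * √2 - 2) * α) = √2 / (1 + α) := by
  have h2 : √2 ^ 2 = 2 := Real.sq_sqrt (by norm_num)
  have hden : 0 < 2 + (2 * √2 - 2) * α :=
    add_pos_of_pos_of_nonneg two_pos (mul_nonneg (by linarith [Real.one_lt_sqrt_two]) hα)
  rw [div_eq_iff hden.ne']
  field_simp
  linear_combination (-α) * h2

theorem endpoint_quotient_E (hα : 0 ≤ α) (hhalf : α < 1 / 2) :
    (2 + (√33 - 3) / 2 * ((3 * α - 1) / (1 - 2 * α))) /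
      (2 + (√33 - 3) / 2 * ((1 - α) / (1 + α))) =
      (√33 - 5) / 4 * ((1 + α) / (1 - 2 * α)) := by
  have h33 : √33 ^ 2 = 33 := Real.sq_sqrt (by norm_num)
  have hfac : 0 < 1 - 2 * α := by linarith
  have hbreak : 0 ≤ (1 - α) / (1 + α) := div_nonneg (by linarith) (by linarith)
  have hden : 0 < 2 + (√33 - 3) / 2 * ((1 - α) / (1 + α)) :=
    add_pos_of_pos_of_nonneg two_pos
      (mul_nonneg (by linarith [five_lt_sqrt_thirtyThree]) hbreak)
  rw [div_eq_iff hden.ne']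
  field_simp
  linear_combination (α - 1) * h33

theorem endpoint_quotient_F (hthird : 1 / 3 ≤ α) (hhalf : α < 1 / 2) :
    (2 + √2 * (α + 1)) / (2 + √2 * ((3 * α - 1) / (1 - 2 * α))) =
      (3 + 2 * √2) * (1 - 2 * α) := by
  have h2 : √2 ^ 2 = 2 := Real.sq_sqrt (by norm_num)
  have hfac : 0 < 1 - 2 * α := by linarith
  have hbreak : 0 ≤ (3 * α - 1) / (1 - 2 * α) := div_nonneg (by linarith) hfac.le
  rw [div_eq_iff (by positivity)]
  field_simp
  linear_combination (2 - 6 * α) * h2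

theorem endpoint_quotient_A (hα : 0 ≤ α) (hone : α < 1) :
    (2 + (√33 - 5) / 2 * ((6 * α - 2) / (1 - α))) / (2 + (√33 - 5) / 2 * α) =
      (7 - √33) / 2 / (1 - α) := by
  have h33 : √33 ^ 2 = 33 := Real.sq_sqrt (by norm_num)
  have hfac : 0 < 1 - α := by linarith
  have hden : 0 < 2 + (√33 - 5) / 2 * α :=
    add_pos_of_pos_of_nonneg two_pos (mul_nonneg (by linarith [five_lt_sqrt_thirtyThree]) hα)
  rw [div_eq_iff hden.ne']
  field_simp
  linear_combination α * h33

theorem endpoint_quotient_B (hthird : 1 / 3 ≤ α) (hone : α < 1) :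
    (2 + (√2 - 1) * ((2 - 4 * α) / α)) / (2 + (√2 - 1) * ((6 * α - 2) / (1 - α))) =
      √2 / 2 * ((1 - α) / α) := by
  have h2 : √2 ^ 2 = 2 := Real.sq_sqrt (by norm_num)
  have hα : 0 < α := by linarith
  have hfac : 0 < 1 - α := by linarith
  have hbreak : 0 ≤ (6 * α - 2) / (1 - α) := div_nonneg (by linarith) hfac.le
  have hden : 0 < 2 + (√2 - 1) * ((6 * α - 2) / (1 - α)) :=
    add_pos_of_pos_of_nonneg two_pos (mul_nonneg (by linarith [Real.one_lt_sqrt_two]) hbreak)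
  rw [div_eq_iff hden.ne']
  field_simp [hα.ne']
  linear_combination (2 - 6 * α) * h2

theorem endpoint_quotient_C (hα : 0 < α) (hhalf : α < 1 / 2) :
    (2 + (√33 - 3) / 6 * (α + 1)) / (2 + (√33 - 3) / 6 * ((2 - 4 * α) / α)) =
      (√33 + 5) / 4 * α := by
  have h33 : √33 ^ 2 = 33 := Real.sq_sqrt (by norm_num)
  have hbreak : 0 ≤ (2 - 4 * α) / α := div_nonneg (by linarith) hα.le
  have hden : 0 < 2 + (√33 - 3) / 6 * ((2 - 4 * α) / α) :=
    add_pos_of_pos_of_nonneg two_pos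
      (mul_nonneg (by linarith [five_lt_sqrt_thirtyThree]) hbreak)
  rw [div_eq_iff hden.ne']
  field_simp
  linear_combination (-2 * (1 - 2 * α)) * h33

theorem prod_upper_quotients (hthird : 1 / 3 ≤ α) (hhalf : α < 1 / 2) :
    ∏ i : Fin 3, (2 + upperHeights i * upperBreakpoints α i.succ) /
      (2 + upperHeights i * upperBreakpoints α i.castSucc) =
      √2 * ((√33 - 5) / 4) * (3 + 2 * √2) := by
  have hα : 0 ≤ α := by linarith
  have hfac : 0 < 1 - 2 * α := by linarith
  rw [Fin.prod_univ_three]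
  calc _ = √2 / (1 + α) * ((√33 - 5) / 4 * ((1 + α) / (1 - 2 * α))) *
        ((3 + 2 * √2) * (1 - 2 * α)) := by
        rw [← endpoint_quotient_D hα, ← endpoint_quotient_E hα hhalf,
          ← endpoint_quotient_F hthird hhalf]
        rfl
    _ = √2 * ((√33 - 5) / 4) * (3 + 2 * √2) *
        ((1 + α) / (1 + α)) * ((1 - 2 * α) / (1 - 2 * α)) := by ring
    _ = _ := by rw [div_self (by positivity), div_self hfac.ne', mul_one, mul_one]

theorem prod_lower_quotients (hthird : 1 / 3 ≤ α) (hhalf : α < 1 / 2) :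
    ∏ i : Fin 3, (2 + lowerHeights i * lowerBreakpoints α i.succ) /
      (2 + lowerHeights i * lowerBreakpoints α i.castSucc) =
      (7 - √33) / 2 * (√2 / 2) * ((√33 + 5) / 4) := by
  have hα : 0 < α := by linarith
  have hone : α < 1 := by linarith
  have hfac : 0 < 1 - α := by linarith
  rw [Fin.prod_univ_three]
  calc _ = (7 - √33) / 2 / (1 - α) * (√2 / 2 * ((1 - α) / α)) * ((√33 + 5) / 4 * α) := by
        rw [← endpoint_quotient_A hα.le hone, ← endpoint_quotient_B hthird hone,
          ← endpoint_quotient_C hα hhalf]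
        rfl
    _ = _ := by field_simp

theorem integral_upper_stepDensity (hα : 0 < α) (hlow : 2 ≤ α ^ 2 + 5 * α)
    (hup : α ^ 2 + 2 * α ≤ 1) :
    ∫ x in α..(α + 1), stepDensity 2 (upperBreakpoints α) upperHeights x =
      Real.log (√2 * ((√33 - 5) / 4) * (3 + 2 * √2)) := by
  have hthird := one_third_lt_of_two_le_sq_add_five_mul hα.le hlow
  have hhalf := lt_one_half_of_sq_add_two_mul_le_one hup
  rw [← prod_upper_quotients hthird.le hhalf]
  exact integral_stepDensity two_pos upperHeights_nonneg
    (monotone_upperBreakpoints hα hlow hup) hα.le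

theorem integral_lower_stepDensity (hα : 0 < α) (hlow : 2 ≤ α ^ 2 + 5 * α)
    (hup : α ^ 2 + 2 * α ≤ 1) :
    ∫ x in α..(α + 1), stepDensity 2 (lowerBreakpoints α) lowerHeights x =
      Real.log ((7 - √33) / 2 * (√2 / 2) * ((√33 + 5) / 4)) := by
  have hthird := one_third_lt_of_two_le_sq_add_five_mul hα.le hlow
  have hhalf := lt_one_half_of_sq_add_two_mul_le_one hup
  rw [← prod_lower_quotients hthird.le hhalf]
  exact integral_stepDensity two_pos lowerHeights_nonneg
    (monotone_lowerBreakpoints hα hlow hup) hα.le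

theorem log_upper_sub_log_lower :
    Real.log (√2 * ((√33 - 5) / 4) * (3 + 2 * √2)) -
      Real.log ((7 - √33) / 2 * (√2 / 2) * ((√33 + 5) / 4)) =
      Real.log ((1 / 32) * (3 + 2 * √2) * (7 + √33) * (√33 - 5) ^ 2) := by
  have h33 : √33 ^ 2 = 33 := Real.sq_sqrt (by norm_num)
  have conj_seven : (7 + √33) * (7 - √33) = 16 := by linear_combination -h33
  have conj_five : (√33 + 5) * (√33 - 5) = 8 := by linear_combination h33
  have h5 : 0 < √33 - 5 := by linarith [five_lt_sqrt_thirtyThree]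
  have h7 : 0 < 7 - √33 := by linarith [sqrt_thirtyThree_lt_seven]
  rw [← Real.log_div (by positivity) (by positivity)]
  congr 1
  rw [div_eq_iff (by positivity)]
  linear_combination
    (-√2 * (3 + 2 * √2) * (√33 - 5) / 512) *
      ((√33 + 5) * (√33 - 5) * conj_seven + 16 * conj_five)

end Boundary

theorem stmt_8 (α : ℝ) (h₁ : (Real.sqrt 33 - 5) / 2 < α) (h₂ : α < Real.sqrt 2 - 1) :
    ∫ x in α..(α + 1), g α x =
      Real.log ((1 / 32) * (3 + 2 * Real.sqrt 2) * (7 + Real.sqrt 33) * (Real.sqrt 33 - 5) ^ 2) := by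
  have hα : 0 < α := by linarith [five_lt_sqrt_thirtyThree]
  have hlow := two_le_sq_add_five_mul h₁.le
  have hup := sq_add_two_mul_le_one hα.le h₂.le
  have integrable_upper := intervalIntegrable_stepDensity two_pos upperHeights_nonneg
    (monotone_upperBreakpoints hα hlow hup) hα.le α (α + 1)
  have integrable_lower := intervalIntegrable_stepDensity two_pos lowerHeights_nonneg
    (monotone_lowerBreakpoints hα hlow hup) hα.le α (α + 1)
  simp only [g_eq_stepDensity_upper_sub_lower]
  rw [intervalIntegral.integral_sub integrable_upper integrable_lower,
    integral_upper_stepDensity hα hlow hup, integral_lower_stepDensity hα hlow hup,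
    log_upper_sub_log_lower]
end

section
/- Let T : [√2 − 1, √2] → [√2 − 1, √2] be defined by T(x) = 2/x − 1 for 2(√2−1) < x ≤ √2, T(x) = 2/x − 2 for 2 − √2 < x ≤ 2(√2−1), T(x) = 2/x − 3 for (6 − 2√2)/7 < x ≤ 2 − √2, and T(x) = 2/x − 4 for √2 − 1 ≤ x ≤ (6 − 2√2)/7. Define f on [√2 − 1, √2] by f(x) = (√33−3)/(4 + (√33−3)x) − (√33−5)/(4 + (√33−5)x) for √2 − 1 ≤ x ≤ 2(√2−1) and f(x) = (√33−3)/(4 + (√33−3)x) − (√33−3)/(12 + (√33−3)x) for 2(√2−1) < x ≤ √2. Then the measure μ with density f with respect to Lebesgue measure on [√2 − 1, √2] satisfies μ(T⁻¹(A)) = μ(A) for every Borel set A ⊆ [√2 − 1, √2], i.e. f is (up to a normalizing constant) the density of a T-invariant measure. -/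
open MeasureTheory Set

/-- The 2-expansion map on `[√2 - 1, √2]` with four branches. -/
noncomputable def Tbar (x : ℝ) : ℝ :=
  if 2 * (Real.sqrt 2 - 1) < x then 2 / x - 1
  else if 2 - Real.sqrt 2 < x then 2 / x - 2
  else if (6 - 2 * Real.sqrt 2) / 7 < x then 2 / x - 3
  else 2 / x - 4

/-- The (unnormalized) invariant density on `[√2 - 1, √2]`. -/
noncomputable def fbar (x : ℝ) : ℝ :=
  if x ≤ 2 * (Real.sqrt 2 - 1) then
    (Real.sqrt 33 - 3) / (4 + (Real.sqrt 33 - 3) * x)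
      - (Real.sqrt 33 - 5) / (4 + (Real.sqrt 33 - 5) * x)
  else
    (Real.sqrt 33 - 3) / (4 + (Real.sqrt 33 - 3) * x)
      - (Real.sqrt 33 - 3) / (12 + (Real.sqrt 33 - 3) * x)

/-!
A density is invariant as soon as it is fixed by the transfer operator, which for the map
`x ↦ N / x - ⌊N / x - α⌋` sends `f` to `y ↦ ∑ N / (y + d) ^ 2 * f (N / (y + d))`, the sum being over
the digits `d` with `N / (y + d) ∈ [α, α + 1]`. For `N = 2` and `α = √2 - 1` these are
`1, 2, 3, 4` if `y ≤ 2 * (√2 - 1)`, and `1, 2, 3` otherwise.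

With `a = (√33 + 3) / 6`, the positive root of `3 * a ^ 2 = 3 * a + 2`, the density is
`1 / (x + a) - 1 / (x + 3 * a + 1)` to the left of `2 * (√2 - 1)` and
`1 / (x + a) - 1 / (x + 3 * a)` to the right of it. Each branch of the transfer operator maps such
a difference to another one: digit `1` yields `1 / (y + a) - 1 / (y + 3 * a - 2)`, and each digit
`d ≥ 2` yields `1 / (y + 3 * a + d - 4) - 1 / (y + 3 * a + d - 3)`. The sum telescopes to the
density at `y`.
-/

open scoped ENNReal Function

section Transfer

/-- `g` is the inverse branch of `T` over the piece `P`, with derivative `g'`: it inverts the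
restriction of `T` to `P`. The condition `g y ∈ P` says that `y` lies in the image `T '' P`. -/
structure IsInverseBranch (T g g' : ℝ → ℝ) (P : Set ℝ) : Prop where
  measurable : Measurable g
  left_inv : ∀ x ∈ P, g (T x) = x
  right_inv : ∀ y, g y ∈ P → T (g y) = y
  hasDerivAt : ∀ y, g y ∈ P → HasDerivAt g (g' y) y

namespace IsInverseBranch

variable {T g g' : ℝ → ℝ} {P A : Set ℝ}

lemma image_inter_preimage (h : IsInverseBranch T g g' P) (A : Set ℝ) :
    g '' (A ∩ g ⁻¹' P) = T ⁻¹' A ∩ P := by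
  ext x
  constructor
  · rintro ⟨y, ⟨hyA, hyP⟩, rfl⟩
    exact ⟨by rwa [mem_preimage, h.right_inv y hyP], hyP⟩
  · rintro ⟨hxA, hxP⟩
    exact ⟨T x, ⟨hxA, by rwa [mem_preimage, h.left_inv x hxP]⟩, h.left_inv x hxP⟩

lemma injOn (h : IsInverseBranch T g g' P) (A : Set ℝ) : InjOn g (A ∩ g ⁻¹' P) :=
  LeftInvOn.injOn (f₁' := T) fun y hy => h.right_inv y hy.2

lemma measurableSet_inter_preimage (h : IsInverseBranch T g g' P) (hP : MeasurableSet P)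
    (hA : MeasurableSet A) : MeasurableSet (T ⁻¹' A ∩ P) := by
  rw [← h.image_inter_preimage]
  exact (hA.inter (h.measurable hP)).image_of_measurable_injOn h.measurable (h.injOn A)

lemma setLIntegral_preimage_inter (h : IsInverseBranch T g g' P) (hP : MeasurableSet P)
    (hA : MeasurableSet A) (F : ℝ → ℝ≥0∞) :
    ∫⁻ x in T ⁻¹' A ∩ P, F x =
      ∫⁻ y in A, (g ⁻¹' P).indicator (fun y => ENNReal.ofReal |g' y| * F (g y)) y := by
  have hgP : MeasurableSet (g ⁻¹' P) := h.measurable hP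
  rw [← h.image_inter_preimage, lintegral_image_eq_lintegral_abs_deriv_mul (hA.inter hgP)
    (fun y hy => (h.hasDerivAt y hy.2).hasDerivWithinAt) (h.injOn A),
    setLIntegral_indicator hgP, inter_comm]

end IsInverseBranch

variable {ι : Type*} {T : ℝ → ℝ} {g g' : ι → ℝ → ℝ} {P : ι → Set ℝ} {F : ℝ → ℝ≥0∞} {A : Set ℝ}

/-- The Perron–Frobenius (transfer) operator, acting on densities, of a map whose inverse branch
over the piece `P i` is `g i` with derivative `g' i`. -/
noncomputable def transfer (P : ι → Set ℝ) (g g' : ι → ℝ → ℝ) (F : ℝ → ℝ≥0∞) (y : ℝ) : ℝ≥0∞ :=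
  ∑' i, (g i ⁻¹' P i).indicator (fun y => ENNReal.ofReal |g' i y| * F (g i y)) y

lemma setLIntegral_preimage_inter_iUnion [Countable ι]
    (hT : ∀ i, IsInverseBranch T (g i) (g' i) (P i)) (hg' : ∀ i, Measurable (g' i))
    (hP : ∀ i, MeasurableSet (P i)) (hdisj : Pairwise (Disjoint on P)) (hF : Measurable F)
    (hA : MeasurableSet A) :
    ∫⁻ x in T ⁻¹' A ∩ ⋃ i, P i, F x = ∫⁻ y in A, transfer P g g' F y := by
  have term_measurable (i : ι) : Measurable
      ((g i ⁻¹' P i).indicator fun y => ENNReal.ofReal |g' i y| * F (g i y)) :=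
    ((hg' i).abs.ennreal_ofReal.mul (hF.comp (hT i).measurable)).indicator
      ((hT i).measurable (hP i))
  calc ∫⁻ x in T ⁻¹' A ∩ ⋃ i, P i, F x
      = ∑' i, ∫⁻ x in T ⁻¹' A ∩ P i, F x := by
        rw [inter_iUnion, lintegral_iUnion
          (fun i => (hT i).measurableSet_inter_preimage (hP i) hA)
          (fun i j hij => (hdisj hij).mono inter_subset_right inter_subset_right)]
    _ = ∑' i, ∫⁻ y in A,
          (g i ⁻¹' P i).indicator (fun y => ENNReal.ofReal |g' i y| * F (g i y)) y :=
        tsum_congr fun i => (hT i).setLIntegral_preimage_inter (hP i) hA F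
    _ = ∫⁻ y in A, transfer P g g' F y :=
        (lintegral_tsum fun i => (term_measurable i).aemeasurable).symm

theorem withDensity_preimage_eq_of_transfer_ae_eq [Countable ι]
    (hT : ∀ i, IsInverseBranch T (g i) (g' i) (P i)) (hg' : ∀ i, Measurable (g' i))
    (hP : ∀ i, MeasurableSet (P i)) (hdisj : Pairwise (Disjoint on P)) (hF : Measurable F)
    (hfix : transfer P g g' F =ᵐ[volume.restrict (⋃ i, P i)] F)
    (hA : MeasurableSet A) (hAP : A ⊆ ⋃ i, P i) :
    (volume.restrict (⋃ i, P i)).withDensity F (T ⁻¹' A) =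
      (volume.restrict (⋃ i, P i)).withDensity F A := by
  have hU : MeasurableSet (⋃ i, P i) := .iUnion hP
  rw [withDensity_apply' _ (T ⁻¹' A), withDensity_apply' _ A, Measure.restrict_restrict' hU,
    Measure.restrict_restrict' hU, inter_eq_left.2 hAP,
    setLIntegral_preimage_inter_iUnion hT hg' hP hdisj hF hA]
  exact lintegral_congr_ae (ae_restrict_of_ae_restrict_of_subset hAP hfix)

end Transfer

section NExpansion

variable {N α x y : ℝ} {d : ℤ}

/-- The `N`-expansion map `T_{α,N}`, considered on `[α, α + 1]`. -/
noncomputable def nExpansion (N α x : ℝ) : ℝ := N / x - ⌊N / x - α⌋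

lemma nExpansion_eq_sub (hle : α + d ≤ N / x) (hlt : N / x < α + d + 1) :
    nExpansion N α x = N / x - d := by
  have hfloor : ⌊N / x - α⌋ = d := by
    rw [Int.floor_eq_iff]
    constructor <;> linarith
  rw [nExpansion, hfloor]

/-- The points of `[α, α + 1]` whose first digit under the `N`-expansion map is `d`. -/
def nCylinder (N α : ℝ) (d : ℤ) : Set ℝ := {x ∈ Icc α (α + 1) | ⌊N / x - α⌋ = d}

lemma measurableSet_nCylinder (N α : ℝ) (d : ℤ) : MeasurableSet (nCylinder N α d) := by
  have digit_measurable : Measurable fun x : ℝ => ⌊N / x - α⌋ := by fun_prop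
  exact measurableSet_Icc.inter (digit_measurable (measurableSet_singleton d))

lemma pairwise_disjoint_nCylinder (N α : ℝ) : Pairwise (Disjoint on nCylinder N α) :=
  fun _ _ hne => disjoint_left.2 fun _ hx hx' => hne (hx.2.symm.trans hx'.2)

lemma iUnion_nCylinder (N α : ℝ) : ⋃ d, nCylinder N α d = Icc α (α + 1) := by
  ext x
  simp [nCylinder]

lemma isInverseBranch_nExpansion (hN : N ≠ 0) (hα : 0 < α) (d : ℤ) :
    IsInverseBranch (nExpansion N α) (fun y => N / (y + d)) (fun y => -N / (y + d) ^ 2)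
      (nCylinder N α d) where
  measurable := by fun_prop
  left_inv := by
    rintro x ⟨-, hd⟩
    rw [nExpansion, hd, sub_add_cancel, div_div_cancel₀ hN]
  right_inv := by
    rintro y ⟨-, hd⟩
    rw [nExpansion, hd, div_div_cancel₀ hN, add_sub_cancel_right]
  hasDerivAt := by
    rintro y ⟨hmem, -⟩
    have hyd : y + d ≠ 0 := (div_ne_zero_iff.1 (hα.trans_le hmem.1).ne').2
    have h := ((hasDerivAt_id' y).add_const (d : ℝ)).fun_inv hyd |>.const_mul N
    simpa only [← div_eq_mul_inv, mul_div_assoc', mul_neg_one] using h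

lemma div_add_mem_nCylinder_iff (hN : N ≠ 0) (hy : y ∈ Ico α (α + 1)) :
    N / (y + d) ∈ nCylinder N α d ↔ N / (y + d) ∈ Icc α (α + 1) := by
  have hfloor : ⌊N / (N / (y + d)) - α⌋ = d := by
    rw [div_div_cancel₀ hN, Int.floor_eq_iff]
    constructor <;> linarith [hy.1, hy.2]
  exact and_iff_left hfloor

lemma transfer_nCylinder_ofReal_eq_sum {f : ℝ → ℝ} {D : Finset ℤ} (hN : N ≠ 0)
    (hf : ∀ x ∈ Icc α (α + 1), 0 ≤ f x) (hy : y ∈ Ico α (α + 1))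
    (hD : ∀ d : ℤ, N / (y + d) ∈ Icc α (α + 1) ↔ d ∈ D) :
    transfer (nCylinder N α) (fun d y => N / (y + d)) (fun d y => -N / (y + d) ^ 2)
        (fun x => ENNReal.ofReal (f x)) y =
      ENNReal.ofReal (∑ d ∈ D, |N| / (y + d) ^ 2 * f (N / (y + d))) := by
  have mem_iff (d : ℤ) : y ∈ (fun y => N / (y + d)) ⁻¹' nCylinder N α d ↔ d ∈ D :=
    (div_add_mem_nCylinder_iff hN hy).trans (hD d)
  rw [transfer, tsum_eq_sum fun d hd => indicator_of_notMem (mt (mem_iff d).1 hd) _,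
    ENNReal.ofReal_sum_of_nonneg fun d hd => mul_nonneg (by positivity) (hf _ ((hD d).2 hd))]
  refine Finset.sum_congr rfl fun d hd => ?_
  rw [indicator_of_mem ((mem_iff d).2 hd), ← ENNReal.ofReal_mul (abs_nonneg _), abs_div, abs_neg,
    abs_of_nonneg (sq_nonneg (y + d))]

theorem withDensity_preimage_eq_of_eqOn_nExpansion {T : ℝ → ℝ} {F : ℝ → ℝ≥0∞} {A : Set ℝ}
    (hN : N ≠ 0) (hα : 0 < α) (hT : EqOn T (nExpansion N α) (Icc α (α + 1))) (hF : Measurable F)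
    (hfix : ∀ y ∈ Ico α (α + 1), transfer (nCylinder N α) (fun d y => N / (y + d))
      (fun d y => -N / (y + d) ^ 2) F y = F y)
    (hA : MeasurableSet A) (hAI : A ⊆ Icc α (α + 1)) :
    (volume.restrict (Icc α (α + 1))).withDensity F (T ⁻¹' A) =
      (volume.restrict (Icc α (α + 1))).withDensity F A := by
  have hT_ae : T =ᵐ[(volume.restrict (Icc α (α + 1))).withDensity F] nExpansion N α :=
    (withDensity_absolutelyContinuous _ F).ae_le (ae_restrict_of_forall_mem measurableSet_Icc hT)
  have hfix_ae : transfer (nCylinder N α) (fun d y => N / (y + d)) (fun d y => -N / (y + d) ^ 2) F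
      =ᵐ[volume.restrict (Icc α (α + 1))] F := by
    rw [← restrict_Ico_eq_restrict_Icc]
    exact ae_restrict_of_forall_mem measurableSet_Ico hfix
  rw [measure_congr (hT_ae.preimage A)]
  rw [← iUnion_nCylinder N α] at hfix_ae hAI ⊢
  exact withDensity_preimage_eq_of_transfer_ae_eq (isInverseBranch_nExpansion hN hα)
    (fun d => by fun_prop) (measurableSet_nCylinder N α) (pairwise_disjoint_nCylinder N α) hF
    hfix_ae hA hAI

end NExpansion

section InvGap

/-- The difference `1 / (x + a) - 1 / (x + b)`; densities of this shape are carried to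
one another by the branches of the transfer operator of an `N`-expansion. -/
noncomputable def invGap (a b x : ℝ) : ℝ := (x + a)⁻¹ - (x + b)⁻¹

variable {N a b a' b' t x : ℝ}

lemma invGap_nonneg (ha : 0 < x + a) (hab : a ≤ b) : 0 ≤ invGap a b x :=
  sub_nonneg.2 (inv_anti₀ ha (by linarith))

lemma invGap_add_invGap (a b c x : ℝ) : invGap a b x + invGap b c x = invGap a c x :=
  sub_add_sub_cancel _ _ _

lemma invGap_add_right (a b x s : ℝ) : invGap a b (x + s) = invGap (s + a) (s + b) x := by
  simp only [invGap, add_assoc]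

lemma div_sq_mul_inv_div_add (ht : 0 < t) (ha : 0 < a) (ha' : 0 < a') (h : a * a' = N) :
    N / t ^ 2 * (N / t + a)⁻¹ = t⁻¹ - (t + a')⁻¹ := by
  subst h
  field_simp
  ring

lemma div_sq_mul_invGap_div (ht : 0 < t) (ha : 0 < a) (ha' : 0 < a') (hb : 0 < b) (hb' : 0 < b')
    (haa' : a * a' = N) (hbb' : b * b' = N) :
    N / t ^ 2 * invGap a b (N / t) = invGap b' a' t := by
  rw [invGap, mul_sub, div_sq_mul_inv_div_add ht ha ha' haa', div_sq_mul_inv_div_add ht hb hb' hbb',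
    sub_sub_sub_cancel_left, invGap]

lemma div_add_mul_eq_inv_add {k m : ℝ} (hm : m ≠ 0) (h : k = m * a) :
    m / (k + m * x) = (x + a)⁻¹ := by
  rw [h, ← mul_add, add_comm a, div_mul_cancel_left₀ hm]

end InvGap

section Density

/-- The positive root of `3 * a ^ 2 = 3 * a + 2`, in terms of which the poles of the density `fbar`
are `-a`, `-3 * a` and `-(3 * a + 1)`. -/
noncomputable def poleParam : ℝ := (√33 + 3) / 6

lemma poleParam_quadratic : 3 * poleParam ^ 2 = 3 * poleParam + 2 := by
  have h : √33 ^ 2 = 33 := Real.sq_sqrt (by norm_num)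
  unfold poleParam
  linear_combination h / 12

lemma four_thirds_lt_poleParam : 4 / 3 < poleParam := by
  have h : (5 : ℝ) < √33 := Real.lt_sqrt_of_sq_lt (by norm_num)
  unfold poleParam
  linarith

lemma sqrt_thirtyThree_eq : √33 = 6 * poleParam - 3 := by
  unfold poleParam
  ring

variable {x : ℝ}

lemma fbar_of_le (h : x ≤ 2 * (√2 - 1)) : fbar x = invGap poleParam (3 * poleParam + 1) x := by
  have hq := poleParam_quadratic
  have ha := four_thirds_lt_poleParam
  rw [fbar, if_pos h, sqrt_thirtyThree_eq, invGap,
    div_add_mul_eq_inv_add (a := poleParam) (by linarith) (by linarith),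
    div_add_mul_eq_inv_add (a := 3 * poleParam + 1) (by linarith) (by linarith)]

lemma fbar_of_lt (h : 2 * (√2 - 1) < x) : fbar x = invGap poleParam (3 * poleParam) x := by
  have hq := poleParam_quadratic
  have ha := four_thirds_lt_poleParam
  rw [fbar, if_neg h.not_ge, sqrt_thirtyThree_eq, invGap,
    div_add_mul_eq_inv_add (a := poleParam) (by linarith) (by linarith),
    div_add_mul_eq_inv_add (a := 3 * poleParam) (by linarith) (by linarith)]

lemma fbar_nonneg (hx : 0 ≤ x) : 0 ≤ fbar x := by
  have ha := four_thirds_lt_poleParam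
  rcases le_or_gt x (2 * (√2 - 1)) with h | h
  · rw [fbar_of_le h]
    exact invGap_nonneg (by linarith) (by linarith)
  · rw [fbar_of_lt h]
    exact invGap_nonneg (by linarith) (by linarith)

lemma measurable_fbar : Measurable fbar :=
  Measurable.ite measurableSet_Iic (by fun_prop) (by fun_prop)

end Density

section TwoExpansion

variable {y t : ℝ}

lemma two_div_sqrt_two_add_one : 2 / (√2 + 1) = 2 * (√2 - 1) := by
  rw [div_eq_iff (by positivity)]
  linarith [Real.mul_self_sqrt (zero_le_two (α := ℝ))]

lemma two_div_sqrt_two_add_two : 2 / (√2 + 2) = 2 - √2 := by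
  rw [div_eq_iff (by positivity)]
  linarith [Real.mul_self_sqrt (zero_le_two (α := ℝ))]

lemma two_div_sqrt_two_add_three : 2 / (√2 + 3) = (6 - 2 * √2) / 7 := by
  rw [div_eq_iff (by positivity)]
  linarith [Real.mul_self_sqrt (zero_le_two (α := ℝ))]

lemma two_div_two_mul_sqrt_two_add_two : 2 / (2 * √2 + 2) = √2 - 1 := by
  rw [div_eq_iff (by positivity)]
  linarith [Real.mul_self_sqrt (zero_le_two (α := ℝ))]

lemma sqrt_two_sub_one_pos : 0 < √2 - 1 := sub_pos.2 Real.one_lt_sqrt_two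

lemma two_div_mem_Icc_iff : 2 / t ∈ Icc (√2 - 1) √2 ↔ t ∈ Icc √2 (2 * √2 + 2) := by
  have pos_of_mem (h : 2 / t ∈ Icc (√2 - 1) √2) : 0 < t :=
    (div_pos_iff_of_pos_left two_pos).1 (sqrt_two_sub_one_pos.trans_le h.1)
  have pos_of_mem' (h : t ∈ Icc √2 (2 * √2 + 2)) : 0 < t :=
    (Real.sqrt_pos.2 two_pos).trans_le h.1
  have iff_of_pos (ht : 0 < t) : 2 / t ∈ Icc (√2 - 1) √2 ↔ t ∈ Icc √2 (2 * √2 + 2) := by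
    rw [mem_Icc, mem_Icc, le_div_comm₀ sqrt_two_sub_one_pos ht, div_le_comm₀ ht (by positivity),
      Real.div_sqrt, ← two_div_two_mul_sqrt_two_add_two, div_div_cancel₀ two_ne_zero, and_comm]
  exact ⟨fun h => (iff_of_pos (pos_of_mem h)).1 h, fun h => (iff_of_pos (pos_of_mem' h)).2 h⟩

lemma Tbar_eqOn_nExpansion : EqOn Tbar (nExpansion 2 (√2 - 1)) (Icc (√2 - 1) √2) := by
  intro x hx
  have hx_pos : 0 < x := sqrt_two_sub_one_pos.trans_le hx.1
  have lt_iff₁ : 2 / (√2 + 1) < x ↔ 2 / x < √2 + 1 := div_lt_comm₀ (by positivity) hx_pos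
  have lt_iff₂ : 2 / (√2 + 2) < x ↔ 2 / x < √2 + 2 := div_lt_comm₀ (by positivity) hx_pos
  have lt_iff₃ : 2 / (√2 + 3) < x ↔ 2 / x < √2 + 3 := div_lt_comm₀ (by positivity) hx_pos
  obtain ⟨h_ge, h_le⟩ : 2 / x ∈ Icc √2 (2 * √2 + 2) :=
    two_div_mem_Icc_iff.1 (by rwa [div_div_cancel₀ two_ne_zero])
  have h_lt : 2 / x < √2 + 4 := by linarith [Real.sqrt_two_lt_three_halves]
  simp only [Tbar, ← two_div_sqrt_two_add_one, ← two_div_sqrt_two_add_two,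
    ← two_div_sqrt_two_add_three, lt_iff₁, lt_iff₂, lt_iff₃]
  split_ifs with h₁ h₂ h₃
  · rw [nExpansion_eq_sub (d := 1) (by push_cast; linarith) (by push_cast; linarith), Int.cast_one]
  · rw [nExpansion_eq_sub (d := 2) (by push_cast; linarith) (by push_cast; linarith),
      Int.cast_ofNat]
  · rw [nExpansion_eq_sub (d := 3) (by push_cast; linarith) (by push_cast; linarith),
      Int.cast_ofNat]
  · rw [nExpansion_eq_sub (d := 4) (by push_cast; linarith) (by push_cast; linarith),
      Int.cast_ofNat]

lemma two_div_add_mem_Icc_iff_of_le (hy_ge : √2 - 1 ≤ y) (hy_le : y ≤ 2 * (√2 - 1)) (d : ℤ) :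
    2 / (y + d) ∈ Icc (√2 - 1) √2 ↔ d ∈ Finset.Icc 1 4 := by
  rw [two_div_mem_Icc_iff, Finset.mem_Icc, mem_Icc]
  have h_sqrt := Real.sqrt_two_lt_three_halves
  constructor
  · rintro ⟨hd_ge, hd_le⟩
    have h0 : (0 : ℝ) < d := by linarith
    have h5 : (d : ℝ) < 5 := by linarith
    exact ⟨by exact_mod_cast h0, Int.lt_add_one_iff.1 (by exact_mod_cast h5)⟩
  · rintro ⟨hd_ge, hd_le⟩
    have h1 : (1 : ℝ) ≤ d := by exact_mod_cast hd_ge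
    have h4 : (d : ℝ) ≤ 4 := by exact_mod_cast hd_le
    constructor <;> linarith

lemma two_div_add_mem_Icc_iff_of_lt (hy_gt : 2 * (√2 - 1) < y) (hy_lt : y < √2) (d : ℤ) :
    2 / (y + d) ∈ Icc (√2 - 1) √2 ↔ d ∈ Finset.Icc 1 3 := by
  rw [two_div_mem_Icc_iff, Finset.mem_Icc, mem_Icc]
  have h_sqrt := Real.one_lt_sqrt_two
  constructor
  · rintro ⟨hd_ge, hd_le⟩
    have h0 : (0 : ℝ) < d := by linarith
    have h4 : (d : ℝ) < 4 := by linarith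
    exact ⟨by exact_mod_cast h0, Int.lt_add_one_iff.1 (by exact_mod_cast h4)⟩
  · rintro ⟨hd_ge, hd_le⟩
    have h1 : (1 : ℝ) ≤ d := by exact_mod_cast hd_ge
    have h3 : (d : ℝ) ≤ 3 := by exact_mod_cast hd_le
    constructor <;> linarith

lemma two_div_sq_mul_fbar_of_lt (ht : 0 < t) (h : t < √2 + 1) :
    2 / t ^ 2 * fbar (2 / t) = invGap (poleParam - 1) (3 * poleParam - 3) t := by
  have hq := poleParam_quadratic
  have ha := four_thirds_lt_poleParam
  have h_branch : 2 * (√2 - 1) < 2 / t := by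
    rw [← two_div_sqrt_two_add_one]
    exact div_lt_div_of_pos_left two_pos ht h
  rw [fbar_of_lt h_branch]
  apply div_sq_mul_invGap_div <;> linarith

lemma two_div_sq_mul_fbar_of_le (h : √2 + 1 ≤ t) :
    2 / t ^ 2 * fbar (2 / t) = invGap (3 * poleParam - 4) (3 * poleParam - 3) t := by
  have hq := poleParam_quadratic
  have ha := four_thirds_lt_poleParam
  have ht : 0 < t := by linarith [Real.one_lt_sqrt_two]
  have h_branch : 2 / t ≤ 2 * (√2 - 1) := by
    rw [← two_div_sqrt_two_add_one]
    exact div_le_div_of_nonneg_left zero_le_two (by positivity) h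
  rw [fbar_of_le h_branch]
  apply div_sq_mul_invGap_div <;> linarith

lemma sum_two_div_sq_mul_fbar_Icc_one_three (hy : y ∈ Ico (√2 - 1) √2) :
    ∑ d ∈ Finset.Icc (1 : ℤ) 3, 2 / (y + d) ^ 2 * fbar (2 / (y + d)) =
      invGap poleParam (3 * poleParam) y := by
  obtain ⟨hy_ge, hy_lt⟩ := hy
  have h_sqrt := Real.one_lt_sqrt_two
  rw [show Finset.Icc (1 : ℤ) 3 = {1, 2, 3} by rfl, Finset.sum_insert (by decide),
    Finset.sum_insert (by decide), Finset.sum_singleton]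
  push_cast
  rw [two_div_sq_mul_fbar_of_lt (by linarith) (by linarith),
    two_div_sq_mul_fbar_of_le (by linarith), two_div_sq_mul_fbar_of_le (by linarith),
    ← invGap_add_invGap poleParam (3 * poleParam - 2) (3 * poleParam),
    ← invGap_add_invGap (3 * poleParam - 2) (3 * poleParam - 1) (3 * poleParam)]
  simp only [invGap_add_right]
  ring_nf

lemma sum_two_div_sq_mul_fbar_Icc_one_four (hy : y ∈ Ico (√2 - 1) √2) :
    ∑ d ∈ Finset.Icc (1 : ℤ) 4, 2 / (y + d) ^ 2 * fbar (2 / (y + d)) =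
      invGap poleParam (3 * poleParam + 1) y := by
  rw [show Finset.Icc (1 : ℤ) 4 = insert 4 (Finset.Icc 1 3) by decide,
    Finset.sum_insert (by decide), sum_two_div_sq_mul_fbar_Icc_one_three hy, add_comm,
    ← invGap_add_invGap poleParam (3 * poleParam) (3 * poleParam + 1)]
  push_cast
  rw [two_div_sq_mul_fbar_of_le (by linarith [hy.1]), invGap_add_right]
  ring_nf

lemma transfer_fbar_eq (hy : y ∈ Ico (√2 - 1) √2) :
    transfer (nCylinder 2 (√2 - 1)) (fun d y => 2 / (y + d)) (fun d y => -2 / (y + d) ^ 2)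
      (fun x => ENNReal.ofReal (fbar x)) y = ENNReal.ofReal (fbar y) := by
  have fbar_nonneg_on : ∀ x ∈ Icc (√2 - 1) (√2 - 1 + 1), 0 ≤ fbar x := fun x hx =>
    fbar_nonneg (sqrt_two_sub_one_pos.le.trans hx.1)
  have hy' : y ∈ Ico (√2 - 1) (√2 - 1 + 1) := by rwa [sub_add_cancel]
  rcases le_or_gt y (2 * (√2 - 1)) with h | h
  · have digits := two_div_add_mem_Icc_iff_of_le hy.1 h
    rw [transfer_nCylinder_ofReal_eq_sum two_ne_zero fbar_nonneg_on hy'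
      (by rwa [sub_add_cancel]), abs_two, sum_two_div_sq_mul_fbar_Icc_one_four hy, fbar_of_le h]
  · have digits := two_div_add_mem_Icc_iff_of_lt h hy.2
    rw [transfer_nCylinder_ofReal_eq_sum two_ne_zero fbar_nonneg_on hy'
      (by rwa [sub_add_cancel]), abs_two, sum_two_div_sq_mul_fbar_Icc_one_three hy, fbar_of_lt h]

end TwoExpansion

theorem stmt_9 :
    ∀ A : Set ℝ, MeasurableSet A → A ⊆ Icc (Real.sqrt 2 - 1) (Real.sqrt 2) →
      ((volume.restrict (Icc (Real.sqrt 2 - 1) (Real.sqrt 2))).withDensity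
          (fun x => ENNReal.ofReal (fbar x))) (Tbar ⁻¹' A) =
      ((volume.restrict (Icc (Real.sqrt 2 - 1) (Real.sqrt 2))).withDensity
          (fun x => ENNReal.ofReal (fbar x))) A := by
  intro A hA hAI
  have invariance := withDensity_preimage_eq_of_eqOn_nExpansion (N := 2) (α := √2 - 1) (T := Tbar)
    (F := fun x => ENNReal.ofReal (fbar x)) (A := A) two_ne_zero sqrt_two_sub_one_pos
  rw [sub_add_cancel] at invariance
  exact invariance Tbar_eqOn_nExpansion measurable_fbar.ennreal_ofReal
    (fun y hy => transfer_fbar_eq hy) hA hAI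
end

section
/- Let T̃ : [1, 2] → [1, 2] be defined by T̃(x) = 4/x − 1 for 4/3 < x ≤ 2 and T̃(x) = 5 − 4/x for 1 ≤ x ≤ 4/3. Then the measure on [1, 2] with density (1/log 3)·(1/x + 1/(4 − x)) with respect to Lebesgue measure is a T̃-invariant probability measure. -/
open MeasureTheory Set

/-- The 4-expansion map with a flipped branch: `T̃(x) = 4/x - 1` on `(4/3, 2]`,
`T̃(x) = 5 - 4/x` on `[1, 4/3]`. -/
noncomputable def Ttilde (x : ℝ) : ℝ :=
  if 4 / 3 < x then 4 / x - 1 else 5 - 4 / x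

/-!
Each branch of `Ttilde` is `x ↦ ε (4 / x - d)` with `ε = ±1`, so its inverse is `y ↦ 4 / z` with
`z = d + ε y`. The change of variables `x = 4 / z` turns the density `1 / x + 1 / (4 - x)` into
`1 / (z - 1)`. For the two branches, `z = 1 + y` and `z = 5 - y`, this equals `1 / y` and
`1 / (4 - y)`, and the two contributions add up to the original density.
-/

section ChangeOfVariables

variable {E : Type*} [NormedAddCommGroup E] [NormedSpace ℝ E] [FiniteDimensional ℝ E]
  [MeasurableSpace E] [BorelSpace E]

theorem map_withDensity_restrict_image_eq_abs_det_fderiv (μ : Measure E) [μ.IsAddHaarMeasure]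
    {T g : E → E} {g' : E → E →L[ℝ] E} {s : Set E} (hT : Measurable T) (hs : MeasurableSet s)
    (hg : ∀ y ∈ s, HasFDerivWithinAt g (g' y) s y) (hTg : LeftInvOn T g s) (ρ : E → ENNReal) :
    ((μ.restrict (g '' s)).withDensity ρ).map T =
      (μ.restrict s).withDensity fun y => ENNReal.ofReal |(g' y).det| * ρ (g y) := by
  ext A hA
  have hAs : MeasurableSet (A ∩ s) := hA.inter hs
  rw [Measure.map_apply hT hA, withDensity_apply _ (hT hA), withDensity_apply _ hA,
    Measure.restrict_restrict (hT hA), Measure.restrict_restrict hA, ← hTg.image_inter',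
    lintegral_image_eq_lintegral_abs_det_fderiv_mul μ hAs
      (fun y hy => (hg y hy.2).mono inter_subset_right) (hTg.injOn.mono inter_subset_right)]

theorem map_withDensity_restrict_image_eq_abs_deriv {T g g' : ℝ → ℝ} {s : Set ℝ}
    (hT : Measurable T) (hs : MeasurableSet s) (hg : ∀ y ∈ s, HasDerivWithinAt g (g' y) s y)
    (hTg : LeftInvOn T g s) (ρ : ℝ → ENNReal) :
    ((volume.restrict (g '' s)).withDensity ρ).map T =
      (volume.restrict s).withDensity fun y => ENNReal.ofReal |g' y| * ρ (g y) := by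
  simpa only [ContinuousLinearMap.det_toSpanSingleton] using
    map_withDensity_restrict_image_eq_abs_det_fderiv volume hT hs
      (fun y hy => (hg y hy).hasFDerivWithinAt) hTg ρ

end ChangeOfVariables

section ConstDiv

theorem image_const_div_eq_preimage {G₀ : Type*} [CommGroupWithZero G₀] {N : G₀} (hN : N ≠ 0)
    (s : Set G₀) : (fun z => N / z) '' s = (fun z => N / z) ⁻¹' s :=
  have h_involutive : Function.Involutive fun z => N / z := fun _ => div_div_cancel₀ hN
  congr_fun (image_eq_preimage_of_inverse h_involutive.leftInverse h_involutive.rightInverse) s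

variable {𝕜 : Type*} [Field 𝕜] [LinearOrder 𝕜] [IsStrictOrderedRing 𝕜] {N a b : 𝕜}

theorem image_const_div_Icc (hN : 0 < N) (ha : 0 < a) (hb : 0 < b) :
    (fun z => N / z) '' Icc a b = Icc (N / b) (N / a) := by
  ext x
  rw [image_const_div_eq_preimage hN.ne', mem_preimage, mem_Icc, mem_Icc, and_comm]
  rcases lt_or_ge 0 x with hx | hx
  · rw [div_le_comm₀ hx hb, le_div_comm₀ ha hx]
  · have hNx : N / x ≤ 0 := div_nonpos_of_nonneg_of_nonpos hN.le hx
    have hNb : 0 < N / b := div_pos hN hb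
    exact iff_of_false (fun h => (ha.trans_le h.2).not_ge hNx) fun h => (hNb.trans_le h.1).not_ge hx

theorem image_const_div_Ico (hN : 0 < N) (ha : 0 < a) (hb : 0 < b) :
    (fun z => N / z) '' Ico a b = Ioc (N / b) (N / a) := by
  ext x
  rw [image_const_div_eq_preimage hN.ne', mem_preimage, mem_Ico, mem_Ioc, and_comm]
  rcases lt_or_ge 0 x with hx | hx
  · rw [div_lt_comm₀ hx hb, le_div_comm₀ ha hx]
  · have hNx : N / x ≤ 0 := div_nonpos_of_nonneg_of_nonpos hN.le hx
    have hNb : 0 < N / b := div_pos hN hb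
    exact iff_of_false (fun h => (ha.trans_le h.2).not_ge hNx) fun h => (hNb.trans h.1).not_ge hx

end ConstDiv

/-- The inverse of the continued fraction branch `x ↦ ε (N / x - d)`, where `ε = ±1`. -/
noncomputable def inverseBranch (N d ε y : ℝ) : ℝ := N / (d + ε * y)

/-- The density `1 / x + 1 / (N - x)` on `(0, N)`, not normalized. -/
noncomputable def reciprocalDensity (N x : ℝ) : ℝ := 1 / x + 1 / (N - x)

section Branch

variable {N d ε y a b : ℝ}

theorem mul_const_div_inverseBranch_sub (hN : N ≠ 0) (hε : ε * ε = 1) :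
    ε * (N / inverseBranch N d ε y - d) = y := by
  rw [inverseBranch, div_div_cancel₀ hN, add_sub_cancel_left, ← mul_assoc, hε, one_mul]

theorem hasDerivAt_inverseBranch (hy : d + ε * y ≠ 0) :
    HasDerivAt (inverseBranch N d ε) (-(N * ε) / (d + ε * y) ^ 2) y := by
  have h_denom : HasDerivAt (fun y => d + ε * y) ε y := by
    simpa using ((hasDerivAt_id y).const_mul ε).const_add d
  refine ((hasDerivAt_const y N).fun_div h_denom hy).congr_deriv ?_
  rw [zero_mul, zero_sub]

theorem image_inverseBranch_one_Ico (hN : 0 < N) (ha : 0 < d + a) (hb : 0 < d + b) :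
    inverseBranch N d 1 '' Ico a b = Ioc (N / (d + b)) (N / (d + a)) := by
  have h_comp : inverseBranch N d 1 = (fun z => N / z) ∘ fun y => d + y := by
    ext y; simp [inverseBranch]
  rw [h_comp, image_comp, image_const_add_Ico, image_const_div_Ico hN ha hb]

theorem image_inverseBranch_neg_one_Icc (hN : 0 < N) (ha : 0 < d - a) (hb : 0 < d - b) :
    inverseBranch N d (-1) '' Icc a b = Icc (N / (d - a)) (N / (d - b)) := by
  have h_comp : inverseBranch N d (-1) = (fun z => N / z) ∘ fun y => d - y := by
    ext y; simp [inverseBranch, sub_eq_add_neg]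
  rw [h_comp, image_comp, image_const_sub_Icc, image_const_div_Icc hN hb ha]

theorem div_sq_mul_reciprocalDensity_div {z : ℝ} (hN : N ≠ 0) (hz : z ≠ 0) (hz_one : z ≠ 1) :
    N / z ^ 2 * reciprocalDensity N (N / z) = 1 / (z - 1) := by
  have hz_sub : z - 1 ≠ 0 := sub_ne_zero.2 hz_one
  have h_sub : N - N / z = N * (z - 1) / z := by field_simp
  rw [reciprocalDensity, h_sub]
  field_simp
  ring

theorem map_withDensity_reciprocalDensity_image_inverseBranch {T : ℝ → ℝ} {s : Set ℝ}
    (hT : Measurable T) (hs : MeasurableSet s) (hN : 0 < N) (hε : |ε| = 1)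
    (h_one_lt : ∀ y ∈ s, 1 < d + ε * y) (hTg : LeftInvOn T (inverseBranch N d ε) s) (c : ℝ) :
    ((volume.restrict (inverseBranch N d ε '' s)).withDensity
        fun x => ENNReal.ofReal (c * reciprocalDensity N x)).map T =
      (volume.restrict s).withDensity fun y => ENNReal.ofReal (c * (1 / (d + ε * y - 1))) := by
  have h_pos : ∀ y ∈ s, 0 < d + ε * y := fun y hy => one_pos.trans (h_one_lt y hy)
  rw [map_withDensity_restrict_image_eq_abs_deriv hT hs
    (fun y hy => (hasDerivAt_inverseBranch (h_pos y hy).ne').hasDerivWithinAt) hTg]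
  refine withDensity_congr_ae (ae_restrict_of_forall_mem hs fun y hy => ?_)
  have h_abs : |-(N * ε) / (d + ε * y) ^ 2| = N / (d + ε * y) ^ 2 := by
    rw [abs_div, abs_neg, abs_mul, abs_of_pos hN, hε, mul_one, abs_of_nonneg (sq_nonneg _)]
  beta_reduce
  rw [← ENNReal.ofReal_mul (abs_nonneg _), h_abs, mul_left_comm, inverseBranch,
    div_sq_mul_reciprocalDensity_div hN.ne' (h_pos y hy).ne' (h_one_lt y hy).ne']

end Branch

section Normalization

variable {N a b : ℝ}

theorem reciprocalDensity_pos {x : ℝ} (hx : 0 < x) (hxN : x < N) : 0 < reciprocalDensity N x :=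
  add_pos (one_div_pos.2 hx) (one_div_pos.2 (sub_pos.2 hxN))

theorem continuousOn_reciprocalDensity (N : ℝ) : ContinuousOn (reciprocalDensity N) (Ioo 0 N) :=
  (continuousOn_const.div continuousOn_id fun _ hx => hx.1.ne').add
    (continuousOn_const.div (by fun_prop) fun _ hx => (sub_pos.2 hx.2).ne')

theorem hasDerivAt_log_sub_log_const_sub {x : ℝ} (hx : x ≠ 0) (hxN : N - x ≠ 0) :
    HasDerivAt (fun x => Real.log x - Real.log (N - x)) (reciprocalDensity N x) x := by
  have h_log_sub := ((hasDerivAt_id' x).const_sub N).log hxN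
  refine ((Real.hasDerivAt_log hx).sub h_log_sub).congr_deriv ?_
  rw [reciprocalDensity, neg_div, sub_neg_eq_add, one_div x]

theorem lintegral_ofReal_reciprocalDensity_Icc {c : ℝ} (hc : 0 ≤ c) (ha : 0 < a) (hab : a ≤ b)
    (hbN : b < N) :
    ∫⁻ x in Icc a b, ENNReal.ofReal (c * reciprocalDensity N x) =
      ENNReal.ofReal
        (c * (Real.log b - Real.log (N - b) - (Real.log a - Real.log (N - a)))) := by
  have h_sub : Icc a b ⊆ Ioo 0 N := Icc_subset_Ioo ha hbN
  have h_cont : ContinuousOn (reciprocalDensity N) (Icc a b) :=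
    (continuousOn_reciprocalDensity N).mono h_sub
  have h_integral : ∫ x in a..b, reciprocalDensity N x =
      Real.log b - Real.log (N - b) - (Real.log a - Real.log (N - a)) := by
    rw [← uIcc_of_le hab] at h_sub h_cont
    exact intervalIntegral.integral_eq_sub_of_hasDerivAt
      (fun x hx => hasDerivAt_log_sub_log_const_sub (h_sub hx).1.ne' (sub_pos.2 (h_sub hx).2).ne')
      h_cont.intervalIntegrable
  have h_nonneg : 0 ≤ᵐ[volume.restrict (Icc a b)] fun x => c * reciprocalDensity N x :=
    ae_restrict_of_forall_mem measurableSet_Icc fun x hx =>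
      mul_nonneg hc (reciprocalDensity_pos (h_sub hx).1 (h_sub hx).2).le
  rw [← ofReal_integral_eq_lintegral_ofReal (h_cont.integrableOn_Icc.const_mul c) h_nonneg,
    integral_const_mul, integral_Icc_eq_integral_Ioc, ← intervalIntegral.integral_of_le hab,
    h_integral]

end Normalization

theorem measurable_Ttilde : Measurable Ttilde :=
  Measurable.ite measurableSet_Ioi (by fun_prop) (by fun_prop)

theorem image_inverseBranch_four_one_one_Ico : inverseBranch 4 1 1 '' Ico 1 2 = Ioc (4 / 3) 2 := by
  rw [image_inverseBranch_one_Ico] <;> norm_num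

theorem image_inverseBranch_four_five_neg_one_Icc :
    inverseBranch 4 5 (-1) '' Icc 1 2 = Icc 1 (4 / 3) := by
  rw [image_inverseBranch_neg_one_Icc] <;> norm_num

theorem leftInvOn_Ttilde_inverseBranch_Ico : LeftInvOn Ttilde (inverseBranch 4 1 1) (Ico 1 2) := by
  intro y hy
  have h_mem : inverseBranch 4 1 1 y ∈ Ioc (4 / 3) 2 :=
    image_inverseBranch_four_one_one_Ico ▸ mem_image_of_mem _ hy
  have h_branch : 1 * (4 / inverseBranch 4 1 1 y - 1) = y :=
    mul_const_div_inverseBranch_sub (by norm_num) (by norm_num)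
  rw [Ttilde, if_pos h_mem.1]
  linarith

theorem leftInvOn_Ttilde_inverseBranch_Icc :
    LeftInvOn Ttilde (inverseBranch 4 5 (-1)) (Icc 1 2) := by
  intro y hy
  have h_mem : inverseBranch 4 5 (-1) y ∈ Icc 1 (4 / 3) :=
    image_inverseBranch_four_five_neg_one_Icc ▸ mem_image_of_mem _ hy
  have h_branch : -1 * (4 / inverseBranch 4 5 (-1) y - 5) = y :=
    mul_const_div_inverseBranch_sub (by norm_num) (by norm_num)
  rw [Ttilde, if_neg h_mem.2.not_gt]
  linarith

theorem map_Ttilde_withDensity_restrict_Ioc (c : ℝ) :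
    ((volume.restrict (Ioc (4 / 3) 2)).withDensity
        fun x => ENNReal.ofReal (c * reciprocalDensity 4 x)).map Ttilde =
      (volume.restrict (Icc 1 2)).withDensity fun y => ENNReal.ofReal (c * (1 / y)) := by
  rw [← image_inverseBranch_four_one_one_Ico,
    map_withDensity_reciprocalDensity_image_inverseBranch measurable_Ttilde measurableSet_Ico
      (by norm_num) (by norm_num) (fun y hy => by linarith [hy.1])
      leftInvOn_Ttilde_inverseBranch_Ico,
    Measure.restrict_congr_set Ico_ae_eq_Icc]
  congr! 5
  ring

theorem map_Ttilde_withDensity_restrict_Icc (c : ℝ) :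
    ((volume.restrict (Icc 1 (4 / 3))).withDensity
        fun x => ENNReal.ofReal (c * reciprocalDensity 4 x)).map Ttilde =
      (volume.restrict (Icc 1 2)).withDensity fun y => ENNReal.ofReal (c * (1 / (4 - y))) := by
  rw [← image_inverseBranch_four_five_neg_one_Icc,
    map_withDensity_reciprocalDensity_image_inverseBranch measurable_Ttilde measurableSet_Icc
      (by norm_num) (by norm_num) (fun y hy => by linarith [hy.2])
      leftInvOn_Ttilde_inverseBranch_Icc]
  congr! 5
  ring

theorem measurePreserving_Ttilde_withDensity {c : ℝ} (hc : 0 ≤ c) :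
    MeasurePreserving Ttilde
      ((volume.restrict (Icc 1 2)).withDensity
        fun x => ENNReal.ofReal (c * reciprocalDensity 4 x))
      ((volume.restrict (Icc 1 2)).withDensity
        fun x => ENNReal.ofReal (c * reciprocalDensity 4 x)) := by
  refine ⟨measurable_Ttilde, ?_⟩
  have h_union : Icc (1 : ℝ) 2 = Icc 1 (4 / 3) ∪ Ioc (4 / 3) 2 :=
    (Icc_union_Ioc_eq_Icc (by norm_num) (by norm_num)).symm
  have h_disjoint : Disjoint (Icc (1 : ℝ) (4 / 3)) (Ioc (4 / 3) 2) :=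
    disjoint_left.2 fun _ hx hx' => hx.2.not_gt hx'.1
  conv_lhs => rw [h_union, Measure.restrict_union h_disjoint measurableSet_Ioc,
    withDensity_add_measure, Measure.map_add _ _ measurable_Ttilde,
    map_Ttilde_withDensity_restrict_Icc, map_Ttilde_withDensity_restrict_Ioc,
    ← withDensity_add_left (by fun_prop)]
  refine withDensity_congr_ae (ae_restrict_of_forall_mem measurableSet_Icc fun y hy => ?_)
  have hy_pos : 0 < y := by linarith [hy.1]
  have hy_lt : 0 < 4 - y := by linarith [hy.2]
  rw [Pi.add_apply, ← ENNReal.ofReal_add (by positivity) (by positivity), ← mul_add, add_comm]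
  rfl

theorem isProbabilityMeasure_withDensity_reciprocalDensity :
    IsProbabilityMeasure ((volume.restrict (Icc 1 2)).withDensity
      fun x => ENNReal.ofReal (1 / Real.log 3 * reciprocalDensity 4 x)) := by
  have h_log : 0 < Real.log 3 := Real.log_pos (by norm_num)
  have h_total : Real.log 2 - Real.log (4 - 2) - (Real.log 1 - Real.log (4 - 1)) = Real.log 3 := by
    norm_num
  rw [isProbabilityMeasure_iff, withDensity_apply _ .univ, Measure.restrict_univ,
    lintegral_ofReal_reciprocalDensity_Icc (by positivity) (by norm_num) (by norm_num)
      (by norm_num), h_total, one_div_mul_cancel h_log.ne', ENNReal.ofReal_one]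

theorem stmt_10 :
    MeasurePreserving Ttilde
      ((volume.restrict (Icc (1 : ℝ) 2)).withDensity
        (fun x => ENNReal.ofReal ((1 / Real.log 3) * (1 / x + 1 / (4 - x)))))
      ((volume.restrict (Icc (1 : ℝ) 2)).withDensity
        (fun x => ENNReal.ofReal ((1 / Real.log 3) * (1 / x + 1 / (4 - x))))) ∧
    IsProbabilityMeasure
      ((volume.restrict (Icc (1 : ℝ) 2)).withDensity
        (fun x => ENNReal.ofReal ((1 / Real.log 3) * (1 / x + 1 / (4 - x))))) := by
  have h_nonneg : 0 ≤ 1 / Real.log 3 := one_div_nonneg.2 (Real.log_nonneg (by norm_num))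
  exact ⟨measurePreserving_Ttilde_withDensity h_nonneg,
    isProbabilityMeasure_withDensity_reciprocalDensity⟩
end

section
/- Let T̃ : [1, 2] → [1, 2] be defined by T̃(x) = 4/x − 1 for 4/3 < x ≤ 2 and T̃(x) = 5 − 4/x for 1 ≤ x ≤ 4/3, and set ε₁(x) = 1, d₁(x) = 1 for x ∈ (4/3, 2] and ε₁(x) = −1, d₁(x) = 5 for x ∈ [1, 4/3]. Define 𝒯 on Ω = [1, 2] × [−1, ∞) by 𝒯(x, y) = (T̃(x), 4ε₁(x)/(d₁(x) + y)). Then 𝒯 maps Ω into Ω and preserves the probability measure on Ω with density (1/log 3)·4/(4 + xy)² with respect to two-dimensional Lebesgue measure. -/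
open MeasureTheory Set

/-- The sign `ε₁(x)`: `1` on `(4/3, 2]` and `-1` on `[1, 4/3]`. -/
noncomputable def eps1 (x : ℝ) : ℝ := if 4 / 3 < x then 1 else -1

/-- The digit `d₁(x)`: `1` on `(4/3, 2]` and `5` on `[1, 4/3]`. -/
noncomputable def dig1 (x : ℝ) : ℝ := if 4 / 3 < x then 1 else 5

/-- The natural extension map `𝒯(x, y) = (T̃(x), 4ε₁(x)/(d₁(x) + y))`. -/
noncomputable def natExt (p : ℝ × ℝ) : ℝ × ℝ :=
  (Ttilde p.1, 4 * eps1 p.1 / (dig1 p.1 + p.2))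

/-!
In the coordinate `w = -N / y` the branch `(x, y) ↦ (e (N / x - d), N e / (d + y))`, `e = ±1`,
applies the same Möbius transformation `z ↦ e (N / z - d)` to `x` and to `w`, and
`N dx dy / (N + x y)²` becomes the Möbius invariant form `dx dw / (x - w)²`. So every branch
preserves this density, and it remains to see that, up to null sets, the two branches of `natExt`
map the two halves of `Ω` cut at `x = 4/3` bijectively onto the two halves cut at `y = 0`.
The total mass is `∫₁² (1 / x + 1 / (4 - x)) dx = log 3`.
-/

open Filter Topology ENNReal

section ChangeOfVariables

theorem measurePreserving_restrict_union {α β : Type*} [MeasurableSpace α] [MeasurableSpace β]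
    {μ : Measure α} {ν : Measure β} {f : α → β} {s₁ s₂ : Set α} {t₁ t₂ : Set β}
    (h₁ : MeasurePreserving f (μ.restrict s₁) (ν.restrict t₁))
    (h₂ : MeasurePreserving f (μ.restrict s₂) (ν.restrict t₂))
    (hs : Disjoint s₁ s₂) (hs₂ : MeasurableSet s₂) (ht : Disjoint t₁ t₂) (ht₂ : MeasurableSet t₂) :
    MeasurePreserving f (μ.restrict (s₁ ∪ s₂)) (ν.restrict (t₁ ∪ t₂)) := by
  rw [Measure.restrict_union hs hs₂, Measure.restrict_union ht ht₂]
  exact h₁.add_measure h₂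

theorem measurePreserving_withDensity_restrict_image {E : Type*} [NormedAddCommGroup E]
    [NormedSpace ℝ E] [FiniteDimensional ℝ E] [MeasurableSpace E] [BorelSpace E]
    {μ : Measure E} [μ.IsAddHaarMeasure] {ρ : E → ℝ≥0∞} {f : E → E} {f' : E → E →L[ℝ] E}
    {s : Set E} (hs : MeasurableSet s) (hf : Measurable f)
    (hf' : ∀ x ∈ s, HasFDerivWithinAt f (f' x) s x) (hinj : InjOn f s)
    (hρ : ∀ x ∈ s, ENNReal.ofReal |(f' x).det| * ρ (f x) = ρ x) :
    MeasurePreserving f ((μ.withDensity ρ).restrict s) ((μ.withDensity ρ).restrict (f '' s)) := by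
  refine ⟨hf, Measure.ext fun t ht => ?_⟩
  have hsub : f ⁻¹' t ∩ s ⊆ s := inter_subset_right
  have hmeas : MeasurableSet (f ⁻¹' t ∩ s) := (hf ht).inter hs
  rw [Measure.map_apply hf ht, Measure.restrict_apply (hf ht), Measure.restrict_apply ht,
    ← image_preimage_inter, withDensity_apply' _ _, withDensity_apply' _ _,
    lintegral_image_eq_lintegral_abs_det_fderiv_mul μ hmeas
      (fun x hx => (hf' x (hsub hx)).mono hsub) (hinj.mono hsub)]
  exact setLIntegral_congr_fun hmeas fun x hx => (hρ x (hsub hx)).symm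

theorem det_prodMap_toSpanSingleton {𝕜 : Type*} [NontriviallyNormedField 𝕜] (a b : 𝕜) :
    ((ContinuousLinearMap.toSpanSingleton 𝕜 a).prodMap
      (ContinuousLinearMap.toSpanSingleton 𝕜 b)).det = a * b := by
  rw [ContinuousLinearMap.det, ContinuousLinearMap.coe_prodMap, LinearMap.det_prodMap]
  simp

end ChangeOfVariables

section Intervals

variable {K : Type*} [Field K] [LinearOrder K] [IsStrictOrderedRing K] {a b c : K}

theorem image_const_div_Ioo_of_pos (hc : 0 < c) (ha : 0 < a) (hb : 0 < b) :
    (fun x => c / x) '' Ioo a b = Ioo (c / b) (c / a) := by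
  ext y
  constructor
  · rintro ⟨x, ⟨hax, hxb⟩, rfl⟩
    have hx : 0 < x := ha.trans hax
    exact ⟨div_lt_div_of_pos_left hc hx hxb, div_lt_div_of_pos_left hc ha hax⟩
  · rintro ⟨hby, hya⟩
    have hy : 0 < y := (div_pos hc hb).trans hby
    exact ⟨c / y, ⟨(lt_div_comm₀ hy ha).1 hya, (div_lt_comm₀ hb hy).1 hby⟩, div_div_cancel₀ hc.ne'⟩

theorem image_const_div_Ioi_of_pos (hc : 0 < c) (ha : 0 < a) :
    (fun x => c / x) '' Ioi a = Ioo 0 (c / a) := by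
  ext y
  constructor
  · rintro ⟨x, hax, rfl⟩
    exact ⟨div_pos hc (ha.trans hax), div_lt_div_of_pos_left hc ha hax⟩
  · rintro ⟨hy, hya⟩
    exact ⟨c / y, (lt_div_comm₀ hy ha).1 hya, div_div_cancel₀ hc.ne'⟩

theorem image_const_div_Ioi_zero (hc : 0 < c) : (fun x => c / x) '' Ioi 0 = Ioi 0 := by
  ext y
  constructor
  · rintro ⟨x, hx, rfl⟩
    exact div_pos hc hx
  · intro hy
    exact ⟨c / y, div_pos hc hy, div_div_cancel₀ hc.ne'⟩

end Intervals

section AlmostEverywhere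

variable {α : Type*} [MeasurableSpace α] [LinearOrder α] {μ : Measure α} [NullSingletonClass μ]
  {a b c : α}

theorem Ioo_union_Ioo_ae_eq_Icc (hab : a < b) (hbc : b ≤ c) :
    (Ioo a b ∪ Ioo b c : Set α) =ᵐ[μ] Icc a c := by
  have hsplit : (Ioo a b ∪ Ioo b c : Set α) =ᵐ[μ] (Ioo a b ∪ Ico b c : Set α) :=
    ae_eq_set_union (ae_eq_refl _) Ioo_ae_eq_Ico
  rw [Ioo_union_Ico_eq_Ioo hab hbc] at hsplit
  exact hsplit.trans Ioo_ae_eq_Icc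

theorem Ioo_union_Ioi_ae_eq_Ici (hab : a < b) : (Ioo a b ∪ Ioi b : Set α) =ᵐ[μ] Ici a := by
  have hsplit : (Ioo a b ∪ Ioi b : Set α) =ᵐ[μ] (Ioo a b ∪ Ici b : Set α) :=
    ae_eq_set_union (ae_eq_refl _) Ioi_ae_eq_Ici
  rw [Ioo_union_Ici_eq_Ioi hab] at hsplit
  exact hsplit.trans Ioi_ae_eq_Ici

end AlmostEverywhere

section FundamentalTheorem

variable {g g' : ℝ → ℝ} {a b l : ℝ}

theorem setLIntegral_Ici_ofReal_of_hasDerivAt_of_nonneg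
    (hg : ∀ x ∈ Ici a, HasDerivAt g (g' x) x) (hg' : ∀ x ∈ Ioi a, 0 ≤ g' x)
    (hl : Tendsto g atTop (𝓝 l)) :
    ∫⁻ x in Ici a, ENNReal.ofReal (g' x) = ENNReal.ofReal (l - g a) := by
  rw [setLIntegral_congr Ioi_ae_eq_Ici.symm,
    ← ofReal_integral_eq_lintegral_ofReal (integrableOn_Ioi_deriv_of_nonneg' hg hg' hl)
      (ae_restrict_of_forall_mem measurableSet_Ioi hg'),
    integral_Ioi_of_hasDerivAt_of_nonneg' hg hg' hl]

theorem setLIntegral_Icc_ofReal_of_hasDerivAt_of_nonneg (hab : a ≤ b)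
    (hg : ∀ x ∈ Icc a b, HasDerivAt g (g' x) x) (hg' : ∀ x ∈ Icc a b, 0 ≤ g' x) :
    ∫⁻ x in Icc a b, ENNReal.ofReal (g' x) = ENNReal.ofReal (g b - g a) := by
  have hint : IntegrableOn g' (Ioc a b) :=
    intervalIntegral.integrableOn_deriv_of_nonneg
      (fun x hx => (hg x hx).continuousAt.continuousWithinAt)
      (fun x hx => hg x (Ioo_subset_Icc_self hx)) (fun x hx => hg' x (Ioo_subset_Icc_self hx))
  rw [setLIntegral_congr Ioc_ae_eq_Icc.symm,
    ← ofReal_integral_eq_lintegral_ofReal hint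
      (ae_restrict_of_forall_mem measurableSet_Ioc fun x hx => hg' x (Ioc_subset_Icc_self hx)),
    ← intervalIntegral.integral_of_le hab,
    intervalIntegral.integral_eq_sub_of_hasDerivAt (by rwa [uIcc_of_le hab])
      ((intervalIntegrable_iff_integrableOn_Ioc_of_le hab).2 hint)]

end FundamentalTheorem

/-- The density `N / (N + x y)²`, invariant under the natural extension of every continued fraction
map with branches `x ↦ ±(N / x - d)`. -/
noncomputable def mobiusDensity (N : ℝ) (p : ℝ × ℝ) : ℝ≥0∞ :=
  ENNReal.ofReal (N / (N + p.1 * p.2) ^ 2)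

/-- The (unnormalised) measure on the whole plane with density `mobiusDensity N`. -/
noncomputable def mobiusMeasure (N : ℝ) : Measure (ℝ × ℝ) :=
  volume.withDensity (mobiusDensity N)

/-- The branch with sign `e = ±1` and digit `d` of the natural extension of a continued fraction
map with numerator `N`. -/
noncomputable def mobiusBranch (N e d : ℝ) : ℝ × ℝ → ℝ × ℝ :=
  Prod.map (fun x => e * (N / x - d)) (fun y => N * e / (d + y))

theorem measurable_mobiusDensity (N : ℝ) : Measurable (mobiusDensity N) := by
  unfold mobiusDensity
  fun_prop

theorem measurable_mobiusBranch (N e d : ℝ) : Measurable (mobiusBranch N e d) := by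
  unfold mobiusBranch
  fun_prop

section Branch

variable {N e d : ℝ}

theorem hasDerivAt_mobiusBranch_fst {x : ℝ} (hx : x ≠ 0) :
    HasDerivAt (fun x => e * (N / x - d)) (e * (-N / x ^ 2)) x := by
  have hdiv := (hasDerivAt_const x N).div (hasDerivAt_id x) hx
  refine ((hdiv.sub_const d).const_mul e).congr_deriv ?_
  simp

theorem hasDerivAt_mobiusBranch_snd {y : ℝ} (hy : d + y ≠ 0) :
    HasDerivAt (fun y => N * e / (d + y)) (-(N * e) / (d + y) ^ 2) y := by
  refine ((hasDerivAt_const y (N * e)).div ((hasDerivAt_id y).const_add d) hy).congr_deriv ?_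
  simp

theorem injective_mobiusBranch (hN : N ≠ 0) (he : e ≠ 0) :
    Function.Injective (mobiusBranch N e d) := by
  have hdiv {c : ℝ} (hc : c ≠ 0) : Function.Injective fun x => c / x := by
    simp only [div_eq_mul_inv]
    exact (mul_right_injective₀ hc).comp inv_injective
  exact ((mul_right_injective₀ he).comp (sub_left_injective.comp (hdiv hN))).prodMap
    ((hdiv (mul_ne_zero hN he)).comp (add_right_injective d))

theorem add_mul_mobiusBranch (he : e ^ 2 = 1) {p : ℝ × ℝ} (hx : p.1 ≠ 0) (hy : d + p.2 ≠ 0) :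
    N + (mobiusBranch N e d p).1 * (mobiusBranch N e d p).2 =
      N * (N + p.1 * p.2) / (p.1 * (d + p.2)) := by
  simp only [mobiusBranch, Prod.map_fst, Prod.map_snd]
  field_simp
  linear_combination N * (N - p.1 * d) * he

theorem abs_jacobian_mul_mobiusDensity_mobiusBranch (hN : N ≠ 0) (he : e ^ 2 = 1) {p : ℝ × ℝ}
    (hx : p.1 ≠ 0) (hy : d + p.2 ≠ 0) :
    ENNReal.ofReal |e * (-N / p.1 ^ 2) * (-(N * e) / (d + p.2) ^ 2)| *
      mobiusDensity N (mobiusBranch N e d p) = mobiusDensity N p := by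
  have hjac : e * (-N / p.1 ^ 2) * (-(N * e) / (d + p.2) ^ 2) = (N / (p.1 * (d + p.2))) ^ 2 := by
    field_simp
    linear_combination he
  rw [mobiusDensity, mobiusDensity, hjac, add_mul_mobiusBranch he hx hy, abs_sq,
    ← ENNReal.ofReal_mul (sq_nonneg _)]
  congr 1
  field_simp

theorem measurePreserving_mobiusBranch (hN : N ≠ 0) (he : e ^ 2 = 1) {s : Set (ℝ × ℝ)}
    (hs : MeasurableSet s) (hsub : s ⊆ {p | p.1 ≠ 0 ∧ d + p.2 ≠ 0}) :
    MeasurePreserving (mobiusBranch N e d) ((mobiusMeasure N).restrict s)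
      ((mobiusMeasure N).restrict (mobiusBranch N e d '' s)) := by
  have he₀ : e ≠ 0 := by
    rintro rfl
    norm_num at he
  refine measurePreserving_withDensity_restrict_image
    (f' := fun p => (ContinuousLinearMap.toSpanSingleton ℝ (e * (-N / p.1 ^ 2))).prodMap
      (ContinuousLinearMap.toSpanSingleton ℝ (-(N * e) / (d + p.2) ^ 2)))
    hs (measurable_mobiusBranch N e d) (fun p hp => ?_)
    (injective_mobiusBranch hN he₀).injOn (fun p hp => ?_)
  · exact (HasFDerivAt.prodMap p (hasDerivAt_mobiusBranch_fst (hsub hp).1).hasFDerivAt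
      (hasDerivAt_mobiusBranch_snd (hsub hp).2).hasFDerivAt).hasFDerivWithinAt
  · rw [det_prodMap_toSpanSingleton]
    exact abs_jacobian_mul_mobiusDensity_mobiusBranch hN he (hsub hp).1 (hsub hp).2

end Branch

section TotalMass

variable {N a b c : ℝ}

theorem setLIntegral_Ici_mobiusDensity {x : ℝ} (hN : 0 ≤ N) (hx : 0 < x) (hxa : 0 < N + x * a) :
    ∫⁻ y in Ici a, mobiusDensity N (x, y) = ENNReal.ofReal (1 / x - a / (N + x * a)) := by
  have hderiv : ∀ y ∈ Ici a, HasDerivAt (fun y => y / (N + x * y)) (N / (N + x * y) ^ 2) y := by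
    intro y hy
    have hpos : 0 < N + x * y := hxa.trans_le (by gcongr; exact hy)
    refine ((hasDerivAt_id y).div (((hasDerivAt_id y).const_mul x).const_add N)
      hpos.ne').congr_deriv ?_
    simp only [id]
    ring
  have hlim : Tendsto (fun y => y / (N + x * y)) atTop (𝓝 (1 / x)) := by
    have hrecip : Tendsto (fun y : ℝ => 1 / (N / y + x)) atTop (𝓝 (1 / (0 + x))) :=
      tendsto_const_nhds.div ((tendsto_id.const_div_atTop N).add_const x) (by simpa using hx.ne')
    rw [zero_add] at hrecip
    refine hrecip.congr' ?_
    filter_upwards [eventually_gt_atTop 0] with y hy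
    rw [div_add' _ _ _ hy.ne', one_div_div]
  exact setLIntegral_Ici_ofReal_of_hasDerivAt_of_nonneg hderiv
    (fun y _ => div_nonneg hN (sq_nonneg _)) hlim

theorem mobiusMeasure_Icc_prod_Ici (hN : 0 ≤ N) (hb : 0 < b) (hbc : b ≤ c)
    (hba : 0 < N + b * a) (hca : 0 < N + c * a) :
    mobiusMeasure N (Icc b c ×ˢ Ici a) =
      ENNReal.ofReal (Real.log (c / (N + c * a)) - Real.log (b / (N + b * a))) := by
  have hpos : ∀ x ∈ Icc b c, 0 < x ∧ 0 < N + x * a := by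
    rintro x ⟨hbx, hxc⟩
    refine ⟨hb.trans_le hbx, ?_⟩
    rcases le_total 0 a with ha | ha
    · exact hba.trans_le (by gcongr)
    · exact hca.trans_le (add_le_add_right (mul_le_mul_of_nonpos_right hxc ha) N)
  have hderiv : ∀ x ∈ Icc b c, HasDerivAt (fun x => Real.log (x / (N + x * a)))
      (1 / x - a / (N + x * a)) x := by
    intro x hx
    obtain ⟨hx₀, hxa⟩ := hpos x hx
    refine (((hasDerivAt_id x).div (((hasDerivAt_id x).mul_const a).const_add N) hxa.ne').log
      (div_pos hx₀ hxa).ne').congr_deriv ?_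
    simp only [id, Pi.div_apply]
    field_simp
  have hnonneg : ∀ x ∈ Icc b c, 0 ≤ 1 / x - a / (N + x * a) := by
    intro x hx
    obtain ⟨hx₀, hxa⟩ := hpos x hx
    rw [div_sub_div _ _ hx₀.ne' hxa.ne']
    exact div_nonneg (by linarith) (by positivity)
  rw [mobiusMeasure, withDensity_apply' _ _, Measure.volume_eq_prod,
    setLIntegral_prod _ (measurable_mobiusDensity N).aemeasurable,
    setLIntegral_congr_fun measurableSet_Icc fun x hx =>
      setLIntegral_Ici_mobiusDensity hN (hpos x hx).1 (hpos x hx).2]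
  exact setLIntegral_Icc_ofReal_of_hasDerivAt_of_nonneg hbc hderiv hnonneg

end TotalMass

section NaturalExtension

/-- The domain `Ω` of the natural extension. -/
abbrev natExtDomain : Set (ℝ × ℝ) := Icc 1 2 ×ˢ Ici (-1)

theorem natExt_of_lt {p : ℝ × ℝ} (hp : 4 / 3 < p.1) : natExt p = mobiusBranch 4 1 1 p := by
  simp [natExt, Ttilde, eps1, dig1, mobiusBranch, Prod.map, hp]

theorem natExt_of_le {p : ℝ × ℝ} (hp : p.1 ≤ 4 / 3) : natExt p = mobiusBranch 4 (-1) 5 p := by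
  simp [natExt, Ttilde, eps1, dig1, mobiusBranch, Prod.map, hp.not_gt]

theorem natExt_eq_ite (p : ℝ × ℝ) :
    natExt p = if 4 / 3 < p.1 then mobiusBranch 4 1 1 p else mobiusBranch 4 (-1) 5 p := by
  split_ifs with h
  · exact natExt_of_lt h
  · exact natExt_of_le (not_lt.1 h)

theorem measurable_natExt : Measurable natExt := by
  rw [funext natExt_eq_ite]
  exact Measurable.ite (measurableSet_lt measurable_const measurable_fst)
    (measurable_mobiusBranch 4 1 1) (measurable_mobiusBranch 4 (-1) 5)

theorem mapsTo_natExt : MapsTo natExt natExtDomain natExtDomain := by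
  rintro ⟨x, y⟩ ⟨⟨hx₁, hx₂⟩, hy⟩
  simp only [mem_Ici] at hx₁ hx₂ hy
  have hx : 0 < x := by linarith
  rcases lt_or_ge (4 / 3) x with h | h
  · have hlower : 2 ≤ 4 / x := by rw [le_div_iff₀ hx]; linarith
    have hupper : 4 / x ≤ 3 := by rw [div_le_iff₀ hx]; linarith
    -- For `y = -1` this is the junk value `4 / 0 = 0`, which still lies in `[-1, ∞)`.
    have hsnd : 0 ≤ 4 / (1 + y) := div_nonneg (by norm_num) (by linarith)
    simp only [natExt_of_lt (p := (x, y)) h, mobiusBranch, Prod.map_apply, one_mul, mul_one]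
    exact ⟨⟨by linarith, by linarith⟩, by simp only [mem_Ici]; linarith⟩
  · have hlower : 3 ≤ 4 / x := by rw [le_div_iff₀ hx]; linarith
    have hupper : 4 / x ≤ 4 := by rw [div_le_iff₀ hx]; linarith
    have hsnd : 4 / (5 + y) ≤ 1 := by rw [div_le_iff₀ (by linarith)]; linarith
    simp only [natExt_of_le (p := (x, y)) h, mobiusBranch, Prod.map_apply, mul_neg_one,
      neg_one_mul, neg_div]
    exact ⟨⟨by linarith, by linarith⟩, by simp only [mem_Ici]; linarith⟩

theorem image_mobiusBranch_four_one_one :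
    mobiusBranch 4 1 1 '' Ioo (4 / 3) 2 ×ˢ Ioi (-1) = Ioo 1 2 ×ˢ Ioi 0 := by
  have hfst : (fun x : ℝ => 1 * (4 / x - 1)) '' Ioo (4 / 3) 2 = Ioo 1 2 := by
    simp only [one_mul]
    rw [← image_image (fun x => x - 1) (fun x => 4 / x),
      image_const_div_Ioo_of_pos (by norm_num) (by norm_num) (by norm_num), image_sub_const_Ioo]
    norm_num
  have hsnd : (fun y : ℝ => 4 * 1 / (1 + y)) '' Ioi (-1) = Ioi 0 := by
    rw [← image_image (fun y => 4 * 1 / y) (fun y => 1 + y), image_const_add_Ioi, add_neg_cancel,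
      image_const_div_Ioi_zero (by norm_num)]
  rw [mobiusBranch, prodMap_image_prod, hfst, hsnd]

theorem image_mobiusBranch_four_neg_one_five :
    mobiusBranch 4 (-1) 5 '' Ioo 1 (4 / 3) ×ˢ Ioi (-1) = Ioo 1 2 ×ˢ Ioo (-1) 0 := by
  have hfst : (fun x : ℝ => -1 * (4 / x - 5)) '' Ioo 1 (4 / 3) = Ioo 1 2 := by
    simp only [neg_one_mul, neg_sub]
    rw [← image_image (fun x => 5 - x) (fun x => 4 / x),
      image_const_div_Ioo_of_pos (by norm_num) (by norm_num) (by norm_num), image_const_sub_Ioo]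
    norm_num
  have hsnd : (fun y : ℝ => 4 * -1 / (5 + y)) '' Ioi (-1) = Ioo (-1) 0 := by
    simp only [mul_neg_one, neg_div]
    rw [← image_image (fun y => -(4 / y)) (fun y => 5 + y), image_const_add_Ioi,
      ← image_image (fun y => -y) (fun y => 4 / y),
      image_const_div_Ioi_of_pos (by norm_num) (by norm_num), image_neg_Ioo]
    norm_num
  rw [mobiusBranch, prodMap_image_prod, hfst, hsnd]

theorem measurePreserving_natExt_Ioo_four_thirds_two :
    MeasurePreserving natExt ((mobiusMeasure 4).restrict (Ioo (4 / 3) 2 ×ˢ Ioi (-1)))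
      ((mobiusMeasure 4).restrict (Ioo 1 2 ×ˢ Ioi 0)) := by
  have hmeas : MeasurableSet (Ioo (4 / 3 : ℝ) 2 ×ˢ Ioi (-1 : ℝ)) :=
    measurableSet_Ioo.prod measurableSet_Ioi
  rw [← image_mobiusBranch_four_one_one]
  refine (measurePreserving_mobiusBranch (by norm_num) (by norm_num) hmeas ?_).congr
    measurable_natExt (ae_restrict_of_forall_mem hmeas fun p hp => (natExt_of_lt hp.1.1).symm)
  rintro ⟨x, y⟩ ⟨⟨hx, -⟩, hy⟩
  rw [mem_Ioi] at hy
  exact ⟨by linarith, by linarith⟩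

theorem measurePreserving_natExt_Ioo_one_four_thirds :
    MeasurePreserving natExt ((mobiusMeasure 4).restrict (Ioo 1 (4 / 3) ×ˢ Ioi (-1)))
      ((mobiusMeasure 4).restrict (Ioo 1 2 ×ˢ Ioo (-1) 0)) := by
  have hmeas : MeasurableSet (Ioo (1 : ℝ) (4 / 3) ×ˢ Ioi (-1 : ℝ)) :=
    measurableSet_Ioo.prod measurableSet_Ioi
  rw [← image_mobiusBranch_four_neg_one_five]
  refine (measurePreserving_mobiusBranch (by norm_num) (by norm_num) hmeas ?_).congr
    measurable_natExt (ae_restrict_of_forall_mem hmeas fun p hp => (natExt_of_le hp.1.2.le).symm)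
  rintro ⟨x, y⟩ ⟨⟨hx, -⟩, hy⟩
  rw [mem_Ioi] at hy
  exact ⟨by linarith, by linarith⟩

theorem mobiusMeasure_restrict_natExtDomain_eq_fst_split (N : ℝ) :
    (mobiusMeasure N).restrict natExtDomain = (mobiusMeasure N).restrict
      (Ioo 1 (4 / 3) ×ˢ Ioi (-1) ∪ Ioo (4 / 3) 2 ×ˢ Ioi (-1)) := by
  rw [← union_prod]
  exact Measure.restrict_congr_set <| (withDensity_absolutelyContinuous _ _).ae_eq <|
    (Measure.set_prod_ae_eq (Ioo_union_Ioo_ae_eq_Icc (by norm_num) (by norm_num))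
      Ioi_ae_eq_Ici).symm

theorem mobiusMeasure_restrict_natExtDomain_eq_snd_split (N : ℝ) :
    (mobiusMeasure N).restrict natExtDomain = (mobiusMeasure N).restrict
      (Ioo 1 2 ×ˢ Ioo (-1) 0 ∪ Ioo 1 2 ×ˢ Ioi 0) := by
  rw [← prod_union]
  exact Measure.restrict_congr_set <| (withDensity_absolutelyContinuous _ _).ae_eq <|
    (Measure.set_prod_ae_eq Ioo_ae_eq_Icc (Ioo_union_Ioi_ae_eq_Ici (by norm_num))).symm

theorem measurePreserving_natExt_restrict_natExtDomain :
    MeasurePreserving natExt ((mobiusMeasure 4).restrict natExtDomain)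
      ((mobiusMeasure 4).restrict natExtDomain) := by
  nth_rewrite 1 [mobiusMeasure_restrict_natExtDomain_eq_fst_split]
  rw [mobiusMeasure_restrict_natExtDomain_eq_snd_split]
  refine measurePreserving_restrict_union measurePreserving_natExt_Ioo_one_four_thirds
    measurePreserving_natExt_Ioo_four_thirds_two (Disjoint.set_prod_left ?_ _ _)
    (measurableSet_Ioo.prod measurableSet_Ioi) (Disjoint.set_prod_right ?_ _ _)
    (measurableSet_Ioo.prod measurableSet_Ioi)
  · exact disjoint_left.2 fun x hx hx' => hx.2.not_gt hx'.1
  · exact disjoint_left.2 fun y hy hy' => hy.2.not_gt hy'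

theorem mobiusMeasure_four_natExtDomain :
    mobiusMeasure 4 natExtDomain = ENNReal.ofReal (Real.log 3) := by
  rw [mobiusMeasure_Icc_prod_Ici (by norm_num) (by norm_num) (by norm_num) (by norm_num)
    (by norm_num), ← Real.log_div (by norm_num) (by norm_num)]
  norm_num

theorem withDensity_eq_cond_mobiusMeasure :
    (volume.restrict natExtDomain).withDensity
      (fun p => ENNReal.ofReal ((1 / Real.log 3) * 4 / (4 + p.1 * p.2) ^ 2)) =
      ProbabilityTheory.cond (mobiusMeasure 4) natExtDomain := by
  have hlog : 0 < Real.log 3 := Real.log_pos (by norm_num)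
  have hdensity : (fun p : ℝ × ℝ => ENNReal.ofReal ((1 / Real.log 3) * 4 / (4 + p.1 * p.2) ^ 2)) =
      (ENNReal.ofReal (Real.log 3))⁻¹ • mobiusDensity 4 := by
    funext p
    rw [Pi.smul_apply, smul_eq_mul, mobiusDensity, ← ENNReal.ofReal_inv_of_pos hlog,
      ← ENNReal.ofReal_mul (inv_nonneg.2 hlog.le), one_div, mul_div_assoc]
  rw [hdensity, withDensity_smul _ (measurable_mobiusDensity 4), ProbabilityTheory.cond,
    mobiusMeasure_four_natExtDomain, mobiusMeasure,
    restrict_withDensity (measurableSet_Icc.prod measurableSet_Ici)]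

end NaturalExtension

theorem stmt_11 :
    MapsTo natExt (Icc (1 : ℝ) 2 ×ˢ Ici (-1 : ℝ)) (Icc (1 : ℝ) 2 ×ˢ Ici (-1 : ℝ)) ∧
    MeasurePreserving natExt
      ((volume.restrict (Icc (1 : ℝ) 2 ×ˢ Ici (-1 : ℝ))).withDensity
        (fun p => ENNReal.ofReal ((1 / Real.log 3) * 4 / (4 + p.1 * p.2) ^ 2)))
      ((volume.restrict (Icc (1 : ℝ) 2 ×ˢ Ici (-1 : ℝ))).withDensity
        (fun p => ENNReal.ofReal ((1 / Real.log 3) * 4 / (4 + p.1 * p.2) ^ 2))) ∧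
    IsProbabilityMeasure
      ((volume.restrict (Icc (1 : ℝ) 2 ×ˢ Ici (-1 : ℝ))).withDensity
        (fun p => ENNReal.ofReal ((1 / Real.log 3) * 4 / (4 + p.1 * p.2) ^ 2))) := by
  rw [withDensity_eq_cond_mobiusMeasure]
  refine ⟨mapsTo_natExt, measurePreserving_natExt_restrict_natExtDomain.smul_measure _, ?_⟩
  refine ProbabilityTheory.cond_isProbabilityMeasure_of_finite ?_ ?_
  · rw [mobiusMeasure_four_natExtDomain, ne_eq, ENNReal.ofReal_eq_zero, not_le]
    exact Real.log_pos (by norm_num)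
  · rw [mobiusMeasure_four_natExtDomain]
    exact ENNReal.ofReal_ne_top
end

section
/- Let T̂ : [1, 2] → [1, 2] be defined by T̂(x) = 4 − 4/x for 4/3 < x ≤ 2 and T̂(x) = 4/x − 2 for 1 ≤ x ≤ 4/3. Then the measure μ on [1, 2] with density f(x) = 1/x + 1/(2 − x) with respect to Lebesgue measure is T̂-invariant, i.e. μ(T̂⁻¹(A)) = μ(A) for every Borel set A ⊆ [1, 2], and μ is an infinite (σ-finite) measure: μ([1, 2]) = ∞. -/
open MeasureTheory Set

/-- The 4-expansion map with a flipped branch: `T̂(x) = 4 - 4/x` on `(4/3, 2]`,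
`T̂(x) = 4/x - 2` on `[1, 4/3]`. -/
noncomputable def That (x : ℝ) : ℝ :=
  if 4 / 3 < x then 4 - 4 / x else 4 / x - 2

/-!
Both branches of `T̂` have the form `x ↦ c / x - d`, with `(c, d) = (4, 2)` and `(-4, -4)`, and each
maps its interval onto `[1, 2]`. Pulling the density `1 / x + 1 / (k - x)` back along the inverse
branch `y ↦ c / (y + d)` gives `± 1 / (y + d - c / k)`. For `k = 2` the two branches contribute
`1 / y` and `1 / (2 - y)`, which add up to the density again. The mass is infinite because
`1 / (2 - x)` is not integrable at `2`.
-/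

section Branch

variable {K : Type*} [Field K]

-- This inverse pair matches the poles `x = 0` and `y = -d`, since `c / 0 = 0`.
lemma leftInverse_div_sub_const_div_add_const {c : K} (hc : c ≠ 0) (d : K) :
    Function.LeftInverse (fun x ↦ c / x - d) (fun y ↦ c / (y + d)) := fun y ↦ by
  simp only [div_div_cancel₀ hc, add_sub_cancel_right]

lemma rightInverse_div_sub_const_div_add_const {c : K} (hc : c ≠ 0) (d : K) :
    Function.RightInverse (fun x ↦ c / x - d) (fun y ↦ c / (y + d)) := fun x ↦ by
  simp only [sub_add_cancel, div_div_cancel₀ hc]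

lemma hasDerivAt_div_add_const (c : ℝ) {d y : ℝ} (hy : y + d ≠ 0) :
    HasDerivAt (fun y ↦ c / (y + d)) (-c / (y + d) ^ 2) y := by
  simpa using (hasDerivAt_const y c).fun_div ((hasDerivAt_id y).add_const d) hy

lemma setLIntegral_preimage_div_sub_const {c d : ℝ} (hc : c ≠ 0) {A : Set ℝ}
    (hA : MeasurableSet A) (hd : -d ∉ A) (f : ℝ → ENNReal) :
    ∫⁻ x in (fun x ↦ c / x - d) ⁻¹' A, f x =
      ∫⁻ y in A, ENNReal.ofReal (|c| / (y + d) ^ 2) * f (c / (y + d)) := by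
  have hderiv : ∀ y ∈ A, HasDerivWithinAt (fun y ↦ c / (y + d)) (-c / (y + d) ^ 2) A y :=
    fun y hy ↦ (hasDerivAt_div_add_const c fun h ↦
      hd (eq_neg_of_add_eq_zero_left h ▸ hy)).hasDerivWithinAt
  have hleft := leftInverse_div_sub_const_div_add_const hc d
  rw [← image_eq_preimage_of_inverse hleft (rightInverse_div_sub_const_div_add_const hc d),
    lintegral_image_eq_lintegral_abs_deriv_mul hA hderiv hleft.injective.injOn]
  simp only [abs_div, abs_neg, abs_sq]

lemma div_sq_mul_one_div_add_one_div_sub {c k u : K} (hc : c ≠ 0) (hk : k ≠ 0) (hu : u ≠ 0)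
    (hku : u * k - c ≠ 0) :
    c / u ^ 2 * (1 / (c / u) + 1 / (k - c / u)) = 1 / (u - c / k) := by
  have hleft : k - c / u = (u * k - c) / u := by field_simp
  have hright : u - c / k = (u * k - c) / k := by field_simp
  rw [hleft, hright]
  field_simp
  ring

lemma div_mem_Icc_iff [LinearOrder K] [IsStrictOrderedRing K] {a b c x : K} (ha : 0 < a)
    (hb : 0 < b) (hc : 0 < c) : c / x ∈ Icc a b ↔ x ∈ Icc (c / b) (c / a) := by
  rcases le_or_gt x 0 with hx | hx
  · exact iff_of_false (fun h ↦ (ha.trans_le h.1).not_ge (div_nonpos_of_nonneg_of_nonpos hc.le hx))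
      fun h ↦ ((div_pos hc hb).trans_le h.1).not_ge hx
  · rw [mem_Icc, mem_Icc, le_div_comm₀ ha hx, div_le_comm₀ hx hb, and_comm]

end Branch

lemma setLIntegral_ofReal_one_div_sub_eq_top {a b : ℝ} (hab : a < b) :
    ∫⁻ x in Icc a b, ENNReal.ofReal (1 / (b - x)) = ⊤ := by
  have hnonneg : 0 ≤ᵐ[volume.restrict (Icc a b)] fun x ↦ 1 / (b - x) :=
    ae_restrict_of_forall_mem measurableSet_Icc fun x hx ↦ one_div_nonneg.2 (sub_nonneg.2 hx.2)
  have hmeas : Measurable fun x : ℝ ↦ 1 / (b - x) := by fun_prop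
  by_contra hfinite
  have hint : IntegrableOn (fun x ↦ 1 / (b - x)) (Icc a b) :=
    (lintegral_ofReal_ne_top_iff_integrable hmeas.aestronglyMeasurable hnonneg).1 hfinite
  have hinv : IntervalIntegrable (fun x ↦ (x - b)⁻¹) volume a b := by
    refine (intervalIntegrable_iff_integrableOn_Icc_of_le hab.le).2 (hint.neg.congr ?_)
    exact .of_forall fun x ↦ by simp [← inv_neg]
  simp [hab.ne] at hinv

section That

lemma measurable_That : Measurable That :=
  Measurable.ite measurableSet_Ioi (by fun_prop) (by fun_prop)

lemma That_of_le {x : ℝ} (hx : x ≤ 4 / 3) : That x = 4 / x - 2 :=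
  if_neg hx.not_gt

lemma That_of_ge {x : ℝ} (hx : 4 / 3 ≤ x) : That x = 4 - 4 / x := by
  rcases hx.eq_or_lt with rfl | hx
  · norm_num [That]
  · exact if_pos hx

lemma four_div_sub_two_mem_Icc_iff {x : ℝ} : 4 / x - 2 ∈ Icc (1 : ℝ) 2 ↔ x ∈ Icc 1 (4 / 3) :=
  calc
    4 / x - 2 ∈ Icc (1 : ℝ) 2 ↔ 4 / x ∈ Icc 3 4 := by rw [sub_mem_Icc_iff_left]; norm_num
    _ ↔ x ∈ Icc (4 / 4) (4 / 3) := div_mem_Icc_iff three_pos four_pos four_pos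
    _ ↔ x ∈ Icc 1 (4 / 3) := by norm_num

lemma four_sub_four_div_mem_Icc_iff {x : ℝ} : 4 - 4 / x ∈ Icc (1 : ℝ) 2 ↔ x ∈ Icc (4 / 3) 2 :=
  calc
    4 - 4 / x ∈ Icc (1 : ℝ) 2 ↔ 4 / x ∈ Icc 2 3 := by rw [sub_mem_Icc_iff_right]; norm_num
    _ ↔ x ∈ Icc (4 / 3) (4 / 2) := div_mem_Icc_iff two_pos three_pos four_pos
    _ ↔ x ∈ Icc (4 / 3) 2 := by norm_num

lemma mapsTo_That_Icc : MapsTo That (Icc 1 2) (Icc 1 2) := fun x hx ↦ by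
  rcases le_total x (4 / 3) with h | h
  · exact That_of_le h ▸ four_div_sub_two_mem_Icc_iff.2 ⟨hx.1, h⟩
  · exact That_of_ge h ▸ four_sub_four_div_mem_Icc_iff.2 ⟨h, hx.2⟩

lemma That_preimage_inter_Icc {A : Set ℝ} (hA : A ⊆ Icc 1 2) :
    That ⁻¹' A ∩ Icc 1 2 = (fun x ↦ 4 / x - 2) ⁻¹' A ∪ (fun x ↦ 4 - 4 / x) ⁻¹' A := by
  ext x
  simp only [mem_inter_iff, mem_union, mem_preimage]
  constructor
  · rintro ⟨hx, -⟩
    rcases le_total x (4 / 3) with h | h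
    · exact .inl (That_of_le h ▸ hx)
    · exact .inr (That_of_ge h ▸ hx)
  · rintro (hx | hx)
    · obtain ⟨h₁, h₂⟩ := four_div_sub_two_mem_Icc_iff.1 (hA hx)
      exact ⟨(That_of_le h₂).symm ▸ hx, h₁, by linarith⟩
    · obtain ⟨h₁, h₂⟩ := four_sub_four_div_mem_Icc_iff.1 (hA hx)
      exact ⟨(That_of_ge h₁).symm ▸ hx, by linarith, h₂⟩

lemma aedisjoint_branch_preimages {A : Set ℝ} (hA : A ⊆ Icc 1 2) :
    AEDisjoint volume ((fun x ↦ 4 / x - 2) ⁻¹' A) ((fun x ↦ 4 - 4 / x) ⁻¹' A) := by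
  refine measure_mono_null ?_ (Real.volume_singleton (a := 4 / 3))
  rintro x ⟨h₁, h₂⟩
  exact le_antisymm (four_div_sub_two_mem_Icc_iff.1 (hA h₁)).2
    (four_sub_four_div_mem_Icc_iff.1 (hA h₂)).1

end That

section InvariantMeasure

/-- The density `1 / x + 1 / (2 - x)` of the invariant measure of `That`, with values in
`[0, ∞]`. At `x = 2` it takes the value `1 / 2`, by the convention `1 / 0 = 0`. -/
noncomputable def invariantDensity (x : ℝ) : ENNReal :=
  ENNReal.ofReal (1 / x + 1 / (2 - x))

/-- The measure on `[1, 2]` with density `invariantDensity`, as a measure on `ℝ` supported on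
`[1, 2]`. -/
noncomputable def invariantMeasure : Measure ℝ :=
  (volume.restrict (Icc 1 2)).withDensity invariantDensity

lemma invariantDensity_eq_add {x : ℝ} (hx : x ∈ Icc 1 2) :
    invariantDensity x = ENNReal.ofReal (1 / x) + ENNReal.ofReal (1 / (2 - x)) :=
  ENNReal.ofReal_add (one_div_nonneg.2 (by linarith [hx.1])) (one_div_nonneg.2 (by linarith [hx.2]))

lemma invariantMeasure_apply {A : Set ℝ} (hA : MeasurableSet A) :
    invariantMeasure A = ∫⁻ x in A ∩ Icc 1 2, invariantDensity x := by
  rw [invariantMeasure, withDensity_apply _ hA, Measure.restrict_restrict hA]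

variable {A : Set ℝ}

lemma setLIntegral_invariantDensity_preimage_four_div_sub_two (hA : MeasurableSet A)
    (hA' : A ⊆ Icc 1 2) :
    ∫⁻ x in (fun x ↦ 4 / x - 2) ⁻¹' A, invariantDensity x =
      ∫⁻ y in A, ENNReal.ofReal (1 / y) := by
  have hpole : (-2 : ℝ) ∉ A := fun h ↦ by linarith [(hA' h).1]
  rw [setLIntegral_preimage_div_sub_const four_ne_zero hA hpole]
  refine setLIntegral_congr_fun hA fun y hy ↦ ?_
  have hy₁ : 1 ≤ y := (hA' hy).1
  have hpull := div_sq_mul_one_div_add_one_div_sub (c := 4) (k := 2) (u := y + 2)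
    four_ne_zero two_ne_zero (by linarith) (by linarith)
  rw [invariantDensity, ← ENNReal.ofReal_mul (by positivity), abs_of_pos four_pos, hpull]
  congr 2
  ring

lemma setLIntegral_invariantDensity_preimage_four_sub_four_div (hA : MeasurableSet A)
    (hA' : A ⊆ Icc 1 2) :
    ∫⁻ x in (fun x ↦ 4 - 4 / x) ⁻¹' A, invariantDensity x =
      ∫⁻ y in A, ENNReal.ofReal (1 / (2 - y)) := by
  have hbranch : (fun x : ℝ ↦ 4 - 4 / x) = fun x ↦ -4 / x - -4 := by ext; ring
  have hpole : (- -4 : ℝ) ∉ A := fun h ↦ by linarith [(hA' h).2]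
  rw [hbranch, setLIntegral_preimage_div_sub_const (by norm_num) hA hpole]
  refine setLIntegral_congr_fun_ae hA ?_
  filter_upwards [volume.ae_ne 2] with y hy_ne hy
  have hy₂ : y < 2 := (hA' hy).2.lt_of_ne hy_ne
  have hpull := div_sq_mul_one_div_add_one_div_sub (c := -4) (k := 2) (u := y + -4)
    (by norm_num) two_ne_zero (by linarith) (by linarith)
  rw [invariantDensity, ← ENNReal.ofReal_mul (by positivity), abs_of_neg (by norm_num), neg_div,
    neg_mul, hpull, ← one_div_neg_eq_neg_one_div]
  congr 2
  ring

lemma setLIntegral_invariantDensity_That_preimage (hA : MeasurableSet A) (hA' : A ⊆ Icc 1 2) :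
    ∫⁻ x in That ⁻¹' A ∩ Icc 1 2, invariantDensity x = ∫⁻ x in A, invariantDensity x := by
  have hmeas : MeasurableSet ((fun x : ℝ ↦ 4 - 4 / x) ⁻¹' A) :=
    (by fun_prop : Measurable fun x : ℝ ↦ 4 - 4 / x) hA
  calc
    ∫⁻ x in That ⁻¹' A ∩ Icc 1 2, invariantDensity x
      = (∫⁻ x in (fun x ↦ 4 / x - 2) ⁻¹' A, invariantDensity x) +
          ∫⁻ x in (fun x ↦ 4 - 4 / x) ⁻¹' A, invariantDensity x := by
        rw [That_preimage_inter_Icc hA', Measure.restrict_union₀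
          (aedisjoint_branch_preimages hA') hmeas.nullMeasurableSet, lintegral_add_measure]
    _ = (∫⁻ y in A, ENNReal.ofReal (1 / y)) + ∫⁻ y in A, ENNReal.ofReal (1 / (2 - y)) := by
        rw [setLIntegral_invariantDensity_preimage_four_div_sub_two hA hA',
          setLIntegral_invariantDensity_preimage_four_sub_four_div hA hA']
    _ = ∫⁻ y in A, ENNReal.ofReal (1 / y) + ENNReal.ofReal (1 / (2 - y)) :=
        (lintegral_add_left (by fun_prop) _).symm
    _ = ∫⁻ y in A, invariantDensity y :=
        setLIntegral_congr_fun hA fun _ hy ↦ (invariantDensity_eq_add (hA' hy)).symm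

lemma measurePreserving_That : MeasurePreserving That invariantMeasure invariantMeasure := by
  refine ⟨measurable_That, Measure.ext fun A hA ↦ ?_⟩
  have hinter : That ⁻¹' A ∩ Icc 1 2 = That ⁻¹' (A ∩ Icc 1 2) ∩ Icc 1 2 := by
    rw [preimage_inter, inter_assoc, inter_eq_right.2 mapsTo_That_Icc.subset_preimage]
  rw [Measure.map_apply measurable_That hA, invariantMeasure_apply (measurable_That hA),
    invariantMeasure_apply hA, hinter, setLIntegral_invariantDensity_That_preimage
      (hA.inter measurableSet_Icc) inter_subset_right]

lemma invariantMeasure_Icc_eq_top : invariantMeasure (Icc 1 2) = ⊤ := by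
  rw [invariantMeasure_apply measurableSet_Icc, inter_self, eq_top_iff,
    ← setLIntegral_ofReal_one_div_sub_eq_top one_lt_two]
  exact setLIntegral_mono' measurableSet_Icc fun x hx ↦
    (invariantDensity_eq_add hx).symm ▸ le_add_self

end InvariantMeasure

theorem stmt_12 :
    (∀ A : Set ℝ, MeasurableSet A → A ⊆ Icc (1 : ℝ) 2 →
      ((volume.restrict (Icc (1 : ℝ) 2)).withDensity
          (fun x => ENNReal.ofReal (1 / x + 1 / (2 - x)))) (That ⁻¹' A) =
      ((volume.restrict (Icc (1 : ℝ) 2)).withDensity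
          (fun x => ENNReal.ofReal (1 / x + 1 / (2 - x)))) A) ∧
    ((volume.restrict (Icc (1 : ℝ) 2)).withDensity
        (fun x => ENNReal.ofReal (1 / x + 1 / (2 - x)))) (Icc (1 : ℝ) 2) = ⊤ :=
  ⟨fun _ hA _ ↦ measurePreserving_That.measure_preimage hA.nullMeasurableSet,
    invariantMeasure_Icc_eq_top⟩
end
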